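/- Let 0 < ρ₀ < 1, λ > 0, t₀ ≥ 2, and set B₁ = 43, B₂ = 4.6. Then for every ρ ∈ [ρ₀, 1), the function ρ ↦ E_ρ(−λ t₀^ρ) is differentiable at ρ and its derivative satisfies d/dρ E_ρ(−λ t₀^ρ) < −1/(λ t₀^ρ) + (B₁/ρ + B₂ ln t₀)/(λ t₀^ρ)². -/

import Mathlib

open Set Real

/-- The Mittag-Leffler function `E_ρ(z) = ∑_{k=0}^∞ z^k / Γ(ρk + 1)`. -/
noncomputable def mittagLeffler (ρ z : ℝ) : ℝ := ∑' k : ℕ, z ^ k / Real.Gamma (ρ * k + 1)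

open Filter MeasureTheory
open scoped Topology

/-!
Differentiating the series in `ρ` produces digamma values `ψ(ρk + 1)`. Euler's integral
`ψ(m + 1) + γ = ∫₀¹ (1 - b ^ m) / (1 - b) db` turns the derivative into
`(log t + γ) F(x) + ∫₀¹ (F(x b ^ ρ) - F(x)) / (1 - b) db`, where `F(x) = z E_ρ'(z)` at
`z = -x = -λ t ^ ρ`.

Writing `x = τ ^ ρ`, collapsing Hankel's contour exhibits `E_ρ(-τ ^ ρ)` as the Laplace transform in
`τ` of a positive measure. Hence `-ρ F(x) = τ V(τ)` for a nonnegative decreasing `V`, and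
monotonicity of `V` compares the quotient in the integral with the partial sums of `∑ b ^ k`. The
error is controlled by `∫₀¹ b ^ k τ b V(τ b) db` for `k = 0, 1, 2`, whose leading terms in `1 / x`
come from the density of the measure near `0`. With four terms of the geometric series the harmonic
number `25 / 12` and `γ + log 2 ≥ 5 / 4` make the leading terms add up to `-1 / (Γ(2 - ρ) x)`, which
is at most `-1 / x`. For `x ≤ 43 / ρ` the right-hand side is nonnegative, and one term of the
geometric series already shows that the derivative is not positive.
-/

/-! ### The Gamma function -/

theorem rpow_mul_exp_neg_le_Gamma {y M : ℝ} (hy : 0 ≤ y) (hM : 0 ≤ M) :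
    M ^ y * exp (-(M + 1)) ≤ Gamma (y + 1) := by
  have hInt := GammaIntegral_convergent (s := y + 1) (by linarith)
  have hsub : Ioc M (M + 1) ⊆ Ioi 0 := fun x hx ↦ hM.trans_lt hx.1
  rw [Gamma_eq_integral (by linarith)]
  calc M ^ y * exp (-(M + 1)) = ∫ _ in Ioc M (M + 1), M ^ y * exp (-(M + 1)) := by simp
    _ ≤ ∫ x in Ioc M (M + 1), exp (-x) * x ^ (y + 1 - 1) := by
        refine setIntegral_mono_on (integrable_const _) (hInt.mono_set hsub) measurableSet_Ioc
          fun x hx ↦ ?_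
        rw [mul_comm, add_sub_cancel_right]
        gcongr
        exacts [hx.2, hx.1.le]
    _ ≤ ∫ x in Ioi 0, exp (-x) * x ^ (y + 1 - 1) := by
        refine setIntegral_mono_set hInt ?_ hsub.eventuallyLE
        filter_upwards [self_mem_ae_restrict measurableSet_Ioi] with x (hx : 0 < x)
        simp only [Pi.zero_apply]
        positivity

theorem Gamma_one_add_le_one {r : ℝ} (h0 : 0 ≤ r) (h1 : r ≤ 1) : Gamma (1 + r) ≤ 1 := by
  have h := convexOn_Gamma.2 (mem_Ioi.2 one_pos) (mem_Ioi.2 two_pos) (sub_nonneg.2 h1) h0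
    (sub_add_cancel 1 r)
  simp only [Gamma_one, Gamma_two, smul_eq_mul] at h
  rw [show (1 - r) * 1 + r * 2 = 1 + r by ring] at h
  linarith

theorem one_div_one_add_le_Gamma_one_add {r : ℝ} (h0 : 0 ≤ r) : 1 / (1 + r) ≤ Gamma (1 + r) := by
  have h : Gamma 2 ≤ Gamma (1 + r + 1) :=
    Gamma_strictMonoOn_Ici.monotoneOn (mem_Ici.2 le_rfl) (mem_Ici.2 (by linarith)) (by linarith)
  rw [Gamma_add_one (by linarith), Gamma_two] at h
  rwa [div_le_iff₀' (by linarith)]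

theorem Gamma_one_add_le_two {r : ℝ} (h0 : 0 ≤ r) (h2 : r ≤ 2) : Gamma (1 + r) ≤ 2 := by
  rcases le_total r 1 with h1 | h1
  · linarith [Gamma_one_add_le_one h0 h1]
  · calc Gamma (1 + r) ≤ Gamma 3 :=
          Gamma_strictMonoOn_Ici.monotoneOn (mem_Ici.2 (by linarith))
            (mem_Ici.2 (by norm_num)) (by linarith)
      _ = 2 := by norm_num [Gamma_ofNat_eq_factorial]

theorem differentiableAt_Gamma_of_pos {y : ℝ} (hy : 0 < y) : DifferentiableAt ℝ Gamma y :=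
  differentiableAt_Gamma fun m ↦ by linarith [m.cast_nonneg (α := ℝ)]

theorem hasDerivAt_Gamma_of_pos {y : ℝ} (hy : 0 < y) :
    HasDerivAt Gamma (logDeriv Gamma y * Gamma y) y := by
  rw [logDeriv_apply, div_mul_cancel₀ _ (Gamma_pos_of_pos hy).ne']
  exact (differentiableAt_Gamma_of_pos hy).hasDerivAt

theorem monotoneOn_logDeriv_Gamma : MonotoneOn (logDeriv Gamma) (Ioi 0) := by
  have hderiv : ∀ x ∈ Ioi (0 : ℝ), HasDerivAt (log ∘ Gamma) (logDeriv Gamma x) x := fun x hx ↦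
    (differentiableAt_Gamma_of_pos hx).hasDerivAt.log (Gamma_pos_of_pos hx).ne'
  exact (convexOn_log_Gamma.monotoneOn_deriv fun x hx ↦ (hderiv x hx).differentiableAt).congr
    fun x hx ↦ (hderiv x hx).deriv

theorem logDeriv_Gamma_add_one {y : ℝ} (hy : 0 < y) :
    logDeriv Gamma (y + 1) = logDeriv Gamma y + 1 / y := by
  have hshift : (fun z ↦ Gamma (z + 1)) =ᶠ[𝓝 y] fun z ↦ z * Gamma z := by
    filter_upwards [lt_mem_nhds hy] with z hz using Gamma_add_one hz.ne'
  calc logDeriv Gamma (y + 1) = logDeriv (fun z ↦ Gamma (z + 1)) y := by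
        rw [logDeriv_apply, logDeriv_apply, deriv_comp_add_const]
    _ = logDeriv (fun z ↦ z * Gamma z) y := by
        rw [logDeriv_apply, logDeriv_apply, hshift.deriv_eq, hshift.eq_of_nhds]
    _ = logDeriv Gamma y + 1 / y := by
        rw [logDeriv_mul y hy.ne' (Gamma_pos_of_pos hy).ne' differentiableAt_fun_id
          (differentiableAt_Gamma_of_pos hy), logDeriv_id', add_comm]

theorem logDeriv_Gamma_one : logDeriv Gamma 1 = -eulerMascheroniConstant := by
  rw [eulerMascheroniConstant_eq_neg_deriv, logDeriv_apply, Gamma_one, div_one, neg_neg]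

theorem five_fourths_le_eulerMascheroniConstant_add_log_two :
    5 / 4 ≤ eulerMascheroniConstant + log 2 := by
  have hseq := eulerMascheroniSeq_lt_eulerMascheroniConstant 31
  have hlog : log ((31 : ℕ) + 1) = 5 * log 2 := by
    rw [show (((31 : ℕ) : ℝ) + 1) = 2 ^ 5 by norm_num, log_pow, Nat.cast_ofNat]
  have hharmonic : ((4027 / 1000 : ℚ) : ℝ) ≤ (harmonic 31 : ℚ) := by
    rw [Rat.cast_le]
    norm_num [harmonic, Finset.sum_range_succ]
  rw [eulerMascheroniSeq, hlog] at hseq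
  push_cast at hharmonic
  linarith [log_two_lt_d9]

/-! ### The harmonic numbers at real arguments -/

theorem integrableOn_rpow_Ioo_zero_one {m : ℝ} (hm : -1 < m) :
    IntegrableOn (fun b : ℝ ↦ b ^ m) (Ioo 0 1) := by
  rw [← integrableOn_Ioc_iff_integrableOn_Ioo,
    ← intervalIntegrable_iff_integrableOn_Ioc_of_le zero_le_one]
  exact intervalIntegral.intervalIntegrable_rpow' hm

theorem setIntegral_rpow_Ioo_zero_one {m : ℝ} (hm : -1 < m) :
    ∫ b in Ioo (0 : ℝ) 1, b ^ m = 1 / (m + 1) := by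
  rw [← integral_Ioc_eq_integral_Ioo, ← intervalIntegral.integral_of_le zero_le_one,
    integral_rpow (Or.inl hm), one_rpow, zero_rpow (by linarith), sub_zero]

theorem one_sub_rpow_div_one_sub_nonneg {m b : ℝ} (hm : 0 ≤ m) (hb : b ∈ Ioo (0 : ℝ) 1) :
    0 ≤ (1 - b ^ m) / (1 - b) :=
  div_nonneg (sub_nonneg.2 (rpow_le_one hb.1.le hb.2.le hm)) (sub_nonneg.2 hb.2.le)

theorem one_sub_rpow_div_one_sub_le {m b : ℝ} (hm : 0 ≤ m) (hb : b ∈ Ioo (0 : ℝ) 1) :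
    (1 - b ^ m) / (1 - b) ≤ m + 1 := by
  rw [div_le_iff₀ (sub_pos.2 hb.2)]
  have hb1 : 0 < 1 - b := sub_pos.2 hb.2
  rcases le_total m 1 with h | h
  · have : b ≤ b ^ m := by
      simpa only [rpow_one] using rpow_le_rpow_of_exponent_ge hb.1 hb.2.le h
    nlinarith
  · have := one_add_mul_self_le_rpow_one_add (s := b - 1) (by linarith [hb.1]) h
    rw [add_sub_cancel] at this
    nlinarith

theorem integrableOn_one_sub_rpow_div_one_sub {m : ℝ} (hm : 0 ≤ m) :
    IntegrableOn (fun b : ℝ ↦ (1 - b ^ m) / (1 - b)) (Ioo 0 1) := by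
  refine Measure.integrableOn_of_bounded (M := m + 1) (by simp)
    (Measurable.aestronglyMeasurable (by fun_prop)) ?_
  filter_upwards [self_mem_ae_restrict measurableSet_Ioo] with b hb
  rw [norm_of_nonneg (one_sub_rpow_div_one_sub_nonneg hm hb)]
  exact one_sub_rpow_div_one_sub_le hm hb

/-- Euler's interpolation of the harmonic numbers to real arguments `m ≥ 0`. It equals
`ψ (m + 1) + γ`, where `ψ` is the digamma function, and provides the integral representation
through which `ψ` enters the derivative of the Mittag-Leffler function in its order. -/
noncomputable def realHarmonic (m : ℝ) : ℝ := ∫ b in Ioo (0 : ℝ) 1, (1 - b ^ m) / (1 - b)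

theorem realHarmonic_zero : realHarmonic 0 = 0 := by
  simp [realHarmonic]

theorem realHarmonic_nonneg {m : ℝ} (hm : 0 ≤ m) : 0 ≤ realHarmonic m :=
  setIntegral_nonneg measurableSet_Ioo fun _ hb ↦ one_sub_rpow_div_one_sub_nonneg hm hb

theorem realHarmonic_le {m : ℝ} (hm : 0 ≤ m) : realHarmonic m ≤ m + 1 := by
  calc realHarmonic m ≤ ∫ _ in Ioo (0 : ℝ) 1, (m + 1) :=
        setIntegral_mono_on (integrableOn_one_sub_rpow_div_one_sub hm)
          (integrableOn_const (by simp)) measurableSet_Ioo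
          fun _ hb ↦ one_sub_rpow_div_one_sub_le hm hb
    _ = m + 1 := by simp

theorem monotoneOn_realHarmonic : MonotoneOn realHarmonic (Ici 0) := by
  refine fun m (hm : 0 ≤ m) n (hn : 0 ≤ n) hmn ↦
    setIntegral_mono_on (integrableOn_one_sub_rpow_div_one_sub hm)
      (integrableOn_one_sub_rpow_div_one_sub hn) measurableSet_Ioo fun b hb ↦ ?_
  have hb1 : 0 ≤ 1 - b := sub_nonneg.2 hb.2.le
  gcongr ?_ / _
  exact sub_le_sub_left (rpow_le_rpow_of_exponent_ge hb.1 hb.2.le hmn) 1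

theorem realHarmonic_add_one {m : ℝ} (hm : 0 ≤ m) :
    realHarmonic (m + 1) = realHarmonic m + 1 / (m + 1) := by
  rw [← setIntegral_rpow_Ioo_zero_one (show -1 < m by linarith), realHarmonic, realHarmonic,
    ← integral_add (integrableOn_one_sub_rpow_div_one_sub hm)
      (integrableOn_rpow_Ioo_zero_one (by linarith))]
  refine setIntegral_congr_fun measurableSet_Ioo fun b hb ↦ ?_
  have hb1 : 1 - b ≠ 0 := (sub_pos.2 hb.2).ne'
  simp only [rpow_add_one hb.1.ne']
  field_simp
  ring

theorem apply_add_natCast_eq_of_apply_add_one_eq {d : ℝ → ℝ} (hd : ∀ x, 0 ≤ x → d (x + 1) = d x)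
    {x : ℝ} (hx : 0 ≤ x) (n : ℕ) : d (x + n) = d x := by
  induction n with
  | zero => rw [Nat.cast_zero, add_zero]
  | succ n ih => rw [Nat.cast_succ, ← add_assoc, hd _ (by positivity), ih]

theorem eqOn_of_monotoneOn_of_add_one {f g c : ℝ → ℝ} (hf : MonotoneOn f (Ici 0))
    (hg : MonotoneOn g (Ici 0)) (hfc : ∀ x, 0 ≤ x → f (x + 1) = f x + c x)
    (hgc : ∀ x, 0 ≤ x → g (x + 1) = g x + c x) (hc : Tendsto (fun n : ℕ ↦ c n) atTop (𝓝 0))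
    (h0 : f 0 = g 0) : EqOn f g (Ici 0) := by
  intro x (hx : 0 ≤ x)
  have hperiodic : ∀ {y : ℝ}, 0 ≤ y → ∀ n : ℕ, f (y + n) - g (y + n) = f y - g y := fun hy n ↦
    apply_add_natCast_eq_of_apply_add_one_eq (d := fun y ↦ f y - g y)
      (fun y hy ↦ by rw [hfc y hy, hgc y hy, add_sub_add_right_eq_sub]) hy n
  have hbound : ∀ n : ℕ, |f x - g x| ≤ c ((n + ⌊x⌋₊ : ℕ) : ℝ) := fun n ↦ by
    set N := n + ⌊x⌋₊ with hN
    have hN0 : (0 : ℝ) ≤ N := N.cast_nonneg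
    have hNx : (N : ℝ) ≤ x + n := by
      rw [hN, Nat.cast_add]; linarith [Nat.floor_le hx]
    have hxN : x + n ≤ N + 1 := by
      rw [hN, Nat.cast_add]; linarith [Nat.lt_floor_add_one x]
    have hnat : f N - g N = 0 := by
      rw [← zero_add (N : ℝ), hperiodic le_rfl, h0, sub_self]
    have hf₁ := hf hN0 (hN0.trans hNx) hNx
    have hf₂ := hf (hN0.trans hNx) (hN0.trans (hNx.trans hxN)) hxN
    have hg₁ := hg hN0 (hN0.trans hNx) hNx
    have hg₂ := hg (hN0.trans hNx) (hN0.trans (hNx.trans hxN)) hxN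
    rw [hfc _ hN0] at hf₂
    rw [hgc _ hN0] at hg₂
    rw [← hperiodic hx n, abs_le]
    constructor <;> linarith
  have hlim : Tendsto (fun n : ℕ ↦ c ((n + ⌊x⌋₊ : ℕ) : ℝ)) atTop (𝓝 0) :=
    hc.comp (tendsto_add_atTop_nat ⌊x⌋₊)
  exact sub_eq_zero.1 (abs_nonpos_iff.1 (ge_of_tendsto' hlim hbound))

theorem realHarmonic_eq_logDeriv_Gamma {m : ℝ} (hm : 0 ≤ m) :
    realHarmonic m = logDeriv Gamma (m + 1) + eulerMascheroniConstant := by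
  refine eqOn_of_monotoneOn_of_add_one (c := fun x ↦ 1 / (x + 1))
    (g := fun x ↦ logDeriv Gamma (x + 1) + eulerMascheroniConstant) monotoneOn_realHarmonic
    (fun x (hx : 0 ≤ x) y (hy : 0 ≤ y) hxy ↦ ?_) (fun x ↦ realHarmonic_add_one)
    (fun x hx ↦ ?_) tendsto_one_div_add_atTop_nhds_zero_nat ?_ hm
  · exact add_le_add_left (monotoneOn_logDeriv_Gamma (mem_Ioi.2 (by linarith))
      (mem_Ioi.2 (by linarith)) (by linarith)) _
  · rw [logDeriv_Gamma_add_one (by linarith), add_right_comm]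
  · rw [realHarmonic_zero, zero_add, logDeriv_Gamma_one, neg_add_cancel]

theorem abs_logDeriv_Gamma_add_one_le {m : ℝ} (hm : 0 ≤ m) : |logDeriv Gamma (m + 1)| ≤ m + 1 := by
  have heq := realHarmonic_eq_logDeriv_Gamma hm
  have hγ := eulerMascheroniConstant_lt_two_thirds
  have hγ' := one_half_lt_eulerMascheroniConstant
  rw [abs_le]
  constructor <;> linarith [realHarmonic_nonneg hm, realHarmonic_le hm]

/-! ### Differentiating the Mittag-Leffler series -/

theorem exists_abs_pow_div_Gamma_le {δ R : ℝ} (hδ : 0 < δ) (hR : 0 ≤ R) :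
    ∃ C, ∀ ρ, δ ≤ ρ → ∀ z, |z| ≤ R → ∀ k : ℕ,
      |z ^ k / Gamma (ρ * k + 1)| ≤ C * (1 / 4) ^ k := by
  set M : ℝ := (4 * (R + 1)) ^ (1 / δ) with hM
  have hM1 : 1 ≤ M := one_le_rpow (by linarith) (by positivity)
  refine ⟨exp (M + 1), fun ρ hρ z hz k ↦ ?_⟩
  have hρk : 0 ≤ ρ * k := mul_nonneg (hδ.le.trans hρ) k.cast_nonneg
  have hG : 0 < Gamma (ρ * k + 1) := Gamma_pos_of_pos (by linarith)
  have hpow : (4 * |z|) ^ k ≤ M ^ (ρ * k) := by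
    calc (4 * |z|) ^ k ≤ (4 * (R + 1)) ^ k := by gcongr; linarith
      _ = M ^ (δ * k) := by
        rw [hM, ← rpow_mul (by positivity), ← mul_assoc, one_div_mul_cancel hδ.ne', one_mul,
          rpow_natCast]
      _ ≤ M ^ (ρ * k) := rpow_le_rpow_of_exponent_le hM1 (by gcongr)
  rw [abs_div, abs_pow, abs_of_pos hG, div_le_iff₀ hG]
  calc |z| ^ k = (4 * |z|) ^ k * (1 / 4) ^ k := by rw [← mul_pow]; congr 1; ring
    _ ≤ M ^ (ρ * k) * (1 / 4) ^ k := by gcongr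
    _ = exp (M + 1) * (1 / 4) ^ k * (M ^ (ρ * k) * exp (-(M + 1))) := by
        rw [exp_neg]; field_simp
    _ ≤ exp (M + 1) * (1 / 4) ^ k * Gamma (ρ * k + 1) := by
        gcongr; exact rpow_mul_exp_neg_le_Gamma hρk (by linarith)

theorem summable_const_mul_pow_mul_one_fourth_pow (C : ℝ) (n : ℕ) :
    Summable fun k : ℕ ↦ C * ((k : ℝ) ^ n * (1 / 4 : ℝ) ^ k) :=
  (summable_pow_mul_geometric_of_norm_lt_one n (by norm_num)).mul_left C

theorem summable_pow_mul_abs_pow_div_Gamma {ρ : ℝ} (hρ : 0 < ρ) (z : ℝ) (n : ℕ) :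
    Summable fun k : ℕ ↦ (k : ℝ) ^ n * |z ^ k / Gamma (ρ * k + 1)| := by
  obtain ⟨C, hC⟩ := exists_abs_pow_div_Gamma_le hρ (abs_nonneg z)
  refine .of_nonneg_of_le (fun k ↦ by positivity) (fun k ↦ ?_)
    (summable_const_mul_pow_mul_one_fourth_pow C n)
  calc (k : ℝ) ^ n * |z ^ k / Gamma (ρ * k + 1)| ≤ (k : ℝ) ^ n * (C * (1 / 4) ^ k) := by
        gcongr; exact hC ρ le_rfl z le_rfl k
    _ = C * ((k : ℝ) ^ n * (1 / 4) ^ k) := by ring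

theorem summable_pow_div_Gamma {ρ : ℝ} (hρ : 0 < ρ) (z : ℝ) :
    Summable fun k : ℕ ↦ z ^ k / Gamma (ρ * k + 1) :=
  .of_abs <| (summable_pow_mul_abs_pow_div_Gamma hρ z 0).congr fun k ↦ by rw [pow_zero, one_mul]

theorem summable_mul_pow_div_Gamma {ρ : ℝ} (hρ : 0 < ρ) (z : ℝ) :
    Summable fun k : ℕ ↦ k * (z ^ k / Gamma (ρ * k + 1)) :=
  .of_abs <| (summable_pow_mul_abs_pow_div_Gamma hρ z 1).congr fun k ↦ by
    rw [abs_mul, Nat.abs_cast, pow_one]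

theorem hasDerivAt_pow_div_Gamma {ρ α s : ℝ} (z β : ℝ) (hs : 0 < ρ + α * s) (k : ℕ) :
    HasDerivAt (fun s ↦ (z * exp (β * s)) ^ k / Gamma ((ρ + α * s) * k + 1))
      (k * ((z * exp (β * s)) ^ k / Gamma ((ρ + α * s) * k + 1)) *
        (β - α * logDeriv Gamma ((ρ + α * s) * k + 1))) s := by
  have hpos : 0 < (ρ + α * s) * k + 1 := by positivity
  have hG := Gamma_pos_of_pos hpos
  have hlin : HasDerivAt (fun s ↦ (ρ + α * s) * k + 1) (α * k) s := by
    simpa using ((((hasDerivAt_id s).const_mul α).const_add ρ).mul_const (k : ℝ)).add_const 1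
  have hexp : HasDerivAt (fun s ↦ z ^ k * exp (k * (β * s)))
      (z ^ k * (exp (k * (β * s)) * (k * β))) s := by
    simpa using ((((hasDerivAt_id s).const_mul β).const_mul (k : ℝ)).exp).const_mul (z ^ k)
  simp only [mul_pow, ← exp_nat_mul]
  have hGamma : HasDerivAt (fun s ↦ Gamma ((ρ + α * s) * k + 1))
      (logDeriv Gamma ((ρ + α * s) * k + 1) * Gamma ((ρ + α * s) * k + 1) * (α * k)) s :=
    HasDerivAt.comp (h₂ := Gamma) s (hasDerivAt_Gamma_of_pos hpos) hlin
  refine (hexp.fun_div hGamma hG.ne').congr_deriv ?_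
  field_simp

theorem abs_deriv_pow_div_Gamma_le {ρ r C z : ℝ} (hρ : 0 ≤ ρ) (hr : ρ ≤ r) (α β : ℝ) {k : ℕ}
    (hC : |z ^ k / Gamma (ρ * k + 1)| ≤ C * (1 / 4) ^ k) :
    |k * (z ^ k / Gamma (ρ * k + 1)) * (β - α * logDeriv Gamma (ρ * k + 1))| ≤
      C * (|β| + |α|) * ((k : ℝ) ^ 1 * (1 / 4) ^ k) +
        C * (|α| * r) * ((k : ℝ) ^ 2 * (1 / 4) ^ k) := by
  have hψ : |logDeriv Gamma (ρ * k + 1)| ≤ r * k + 1 :=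
    (abs_logDeriv_Gamma_add_one_le (by positivity)).trans (by gcongr)
  have hfactor : |β - α * logDeriv Gamma (ρ * k + 1)| ≤ |β| + |α| * (r * k + 1) := by
    refine (abs_sub _ _).trans ?_
    rw [abs_mul]
    gcongr
  rw [abs_mul, abs_mul, Nat.abs_cast]
  have hC0 : 0 ≤ C * (1 / 4) ^ k := (abs_nonneg _).trans hC
  calc _ ≤ k * (C * (1 / 4) ^ k) * (|β| + |α| * (r * k + 1)) := by gcongr
    _ = _ := by ring

theorem exists_forall_abs_le_add_mul_mem_Icc {ρ : ℝ} (hρ : 0 < ρ) (α : ℝ) :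
    ∃ η > 0, ∀ s, |s| ≤ η → ρ + α * s ∈ Icc (ρ / 2) (2 * ρ) := by
  refine ⟨ρ / (2 * (|α| + 1)), by positivity, fun s hs ↦ ?_⟩
  have hαs : |α * s| ≤ ρ / 2 := by
    calc |α * s| ≤ |α| * (ρ / (2 * (|α| + 1))) := by rw [abs_mul]; gcongr
      _ ≤ ρ / 2 := by
        rw [mul_div_assoc', div_le_div_iff₀ (by positivity) two_pos]
        nlinarith [abs_nonneg α]
  constructor <;> linarith [abs_le.1 hαs]

theorem hasDerivAt_mittagLeffler_add_mul {ρ : ℝ} (hρ : 0 < ρ) (α z β : ℝ) :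
    HasDerivAt (fun s ↦ mittagLeffler (ρ + α * s) (z * exp (β * s)))
      (∑' k : ℕ, k * (z ^ k / Gamma (ρ * k + 1)) * (β - α * logDeriv Gamma (ρ * k + 1))) 0 := by
  obtain ⟨η, hη, horder⟩ := exists_forall_abs_le_add_mul_mem_Icc hρ α
  obtain ⟨C, hC⟩ := exists_abs_pow_div_Gamma_le (half_pos hρ)
    (show 0 ≤ |z| * exp (|β| * η) by positivity)
  have hball : ∀ s ∈ Metric.ball (0 : ℝ) η, |s| ≤ η := fun s hs ↦ (mem_ball_zero_iff.1 hs).le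
  have hlow : ∀ s ∈ Metric.ball (0 : ℝ) η, 0 < ρ + α * s := fun s hs ↦
    (half_pos hρ).trans_le (horder s (hball s hs)).1
  have harg : ∀ s ∈ Metric.ball (0 : ℝ) η, |z * exp (β * s)| ≤ |z| * exp (|β| * η) :=
    fun s hs ↦ by
      rw [abs_mul, abs_exp]
      refine mul_le_mul_of_nonneg_left (exp_le_exp.2 ?_) (abs_nonneg z)
      calc β * s ≤ |β| * |s| := (le_abs_self _).trans (abs_mul β s).le
        _ ≤ |β| * η := by gcongr; exact hball s hs
  simpa only [mul_zero, add_zero, exp_zero, mul_one] using!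
    hasDerivAt_tsum_of_isPreconnected
      ((summable_const_mul_pow_mul_one_fourth_pow _ 1).add
        (summable_const_mul_pow_mul_one_fourth_pow _ 2)) Metric.isOpen_ball
      (convex_ball 0 η).isPreconnected
      (fun k s hs ↦ hasDerivAt_pow_div_Gamma z β (hlow s hs) k)
      (fun k s hs ↦ abs_deriv_pow_div_Gamma_le (hlow s hs).le (horder s (hball s hs)).2 α β
        (hC _ (horder s (hball s hs)).1 _ (harg s hs) k))
      (Metric.mem_ball_self hη)
      (by simpa only [mul_zero, add_zero] using summable_pow_div_Gamma hρ _)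
      (Metric.mem_ball_self hη)

/-- The Euler derivative `z · E_ρ'(z)` of the Mittag-Leffler function, as a series. -/
noncomputable def mittagLefflerEuler (ρ z : ℝ) : ℝ := ∑' k : ℕ, k * (z ^ k / Gamma (ρ * k + 1))

theorem hasDerivAt_mittagLeffler_mul_exp {ρ : ℝ} (hρ : 0 < ρ) (z : ℝ) :
    HasDerivAt (fun s ↦ mittagLeffler ρ (z * exp s)) (mittagLefflerEuler ρ z) 0 := by
  simpa only [zero_mul, add_zero, one_mul, sub_zero, mul_one] using!
    hasDerivAt_mittagLeffler_add_mul hρ 0 z 1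

theorem hasDerivAt_mittagLeffler_order {ρ t : ℝ} (hρ : 0 < ρ) (ht : 0 < t) (w : ℝ) :
    HasDerivAt (fun s ↦ mittagLeffler s (w * t ^ s))
      (∑' k : ℕ, k * ((w * t ^ ρ) ^ k / Gamma (ρ * k + 1)) *
        (log t - logDeriv Gamma (ρ * k + 1))) ρ := by
  have hpath : (fun s ↦ mittagLeffler (ρ + 1 * s) (w * t ^ ρ * exp (log t * s))) =
      fun s ↦ mittagLeffler (s + ρ) (w * t ^ (s + ρ)) := by
    funext s
    rw [one_mul, add_comm ρ s, mul_assoc, ← rpow_def_of_pos ht, ← rpow_add ht, add_comm ρ s]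
  have h := hasDerivAt_mittagLeffler_add_mul hρ 1 (w * t ^ ρ) (log t)
  rw [hpath] at h
  simpa only [zero_add, one_mul, sub_add_cancel, add_sub_cancel_right, sub_self] using
    HasDerivAt.comp_sub_const (x := ρ) (a := ρ)
      (f := fun s ↦ mittagLeffler (s + ρ) (w * t ^ (s + ρ)))
      (by simpa only [sub_self, one_mul] using h)

theorem integrable_tsum_and_hasSum_integral {α : Type*} [MeasurableSpace α] {μ : Measure α}
    {F : ℕ → α → ℝ} {u : ℕ → ℝ} {g : α → ℝ} (hF : ∀ k, AEStronglyMeasurable (F k) μ)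
    (hu : Summable u) (hg : Integrable g μ) (hFu : ∀ᵐ b ∂μ, ∀ k, ‖F k b‖ ≤ u k * g b) :
    Integrable (fun b ↦ ∑' k, F k b) μ ∧
      HasSum (fun k ↦ ∫ b, F k b ∂μ) (∫ b, ∑' k, F k b ∂μ) := by
  have hsummable : ∀ᵐ b ∂μ, HasSum (F · b) (∑' k, F k b) := by
    filter_upwards [hFu] with b hb
    exact (Summable.of_norm_bounded (hu.mul_right _) hb).hasSum
  have hmeas : AEStronglyMeasurable (fun b ↦ ∑' k, F k b) μ :=
    aestronglyMeasurable_of_tendsto_ae atTop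
      (fun n ↦ Finset.aestronglyMeasurable_fun_sum (Finset.range n) fun k _ ↦ hF k)
      (hsummable.mono fun b hb ↦ hb.tendsto_sum_nat)
  constructor
  · refine (hg.const_mul (∑' k, u k)).mono' hmeas ?_
    filter_upwards [hFu] with b hb
    exact tsum_of_norm_bounded (hu.hasSum.mul_right _) hb
  · refine hasSum_integral_of_dominated_convergence (fun k b ↦ u k * g b) hF
      (fun k ↦ hFu.mono fun b hb ↦ hb k) (.of_forall fun b ↦ hu.mul_right (g b)) ?_ hsummable
    simpa only [tsum_mul_right] using hg.const_mul (∑' k, u k)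

theorem mul_rpow_pow_div_Gamma {ρ b : ℝ} (z : ℝ) (hb : 0 ≤ b) (k : ℕ) :
    (z * b ^ ρ) ^ k / Gamma (ρ * k + 1) = z ^ k / Gamma (ρ * k + 1) * b ^ (ρ * k) := by
  rw [mul_pow, ← rpow_natCast (b ^ ρ), ← rpow_mul hb, mul_div_right_comm]

theorem tsum_mul_one_sub_rpow_div_one_sub {ρ b : ℝ} (hρ : 0 < ρ) (z : ℝ) (hb : 0 ≤ b) :
    ∑' k : ℕ, -(k * (z ^ k / Gamma (ρ * k + 1))) * ((1 - b ^ (ρ * k)) / (1 - b)) =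
      (mittagLefflerEuler ρ (z * b ^ ρ) - mittagLefflerEuler ρ z) / (1 - b) := by
  rw [mittagLefflerEuler, mittagLefflerEuler, ← Summable.tsum_sub
    (summable_mul_pow_div_Gamma hρ _) (summable_mul_pow_div_Gamma hρ z), ← tsum_div_const]
  refine tsum_congr fun k ↦ ?_
  rw [mul_rpow_pow_div_Gamma z hb]
  ring

theorem integrableOn_and_hasSum_mittagLefflerEuler_sub_div {ρ : ℝ} (hρ : 0 < ρ) (z : ℝ) :
    IntegrableOn (fun b ↦ (mittagLefflerEuler ρ (z * b ^ ρ) - mittagLefflerEuler ρ z) / (1 - b))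
      (Ioo 0 1) ∧
    HasSum (fun k : ℕ ↦ -(k * (z ^ k / Gamma (ρ * k + 1)) * realHarmonic (ρ * k)))
      (∫ b in Ioo 0 1,
        (mittagLefflerEuler ρ (z * b ^ ρ) - mittagLefflerEuler ρ z) / (1 - b)) := by
  have hρk : ∀ k : ℕ, 0 ≤ ρ * k := fun k ↦ by positivity
  have hsummable : Summable fun k : ℕ ↦ k * |z ^ k / Gamma (ρ * k + 1)| * (ρ * k + 1) :=
    (((summable_pow_mul_abs_pow_div_Gamma hρ z 2).mul_left ρ).add
      (summable_pow_mul_abs_pow_div_Gamma hρ z 1)).congr fun k ↦ by ring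
  have hcont : ∀ k : ℕ, ContinuousOn
      (fun b : ℝ ↦ -(k * (z ^ k / Gamma (ρ * k + 1))) * ((1 - b ^ (ρ * k)) / (1 - b)))
      (Ioo 0 1) := fun k b hb ↦
    (((continuousAt_const.sub (continuousAt_rpow_const b _ (.inl hb.1.ne'))).div
      (continuousAt_const.sub continuousAt_id) (sub_pos.2 hb.2).ne').const_mul _
      ).continuousWithinAt
  have hbound : ∀ k : ℕ, ∀ b ∈ Ioo (0 : ℝ) 1,
      ‖-(k * (z ^ k / Gamma (ρ * k + 1))) * ((1 - b ^ (ρ * k)) / (1 - b))‖ ≤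
        k * |z ^ k / Gamma (ρ * k + 1)| * (ρ * k + 1) := fun k b hb ↦ by
    rw [norm_mul, norm_neg, norm_mul, norm_natCast, norm_eq_abs,
      norm_of_nonneg (one_sub_rpow_div_one_sub_nonneg (hρk k) hb)]
    gcongr
    exact one_sub_rpow_div_one_sub_le (hρk k) hb
  have hsum_eq : EqOn (fun b ↦ ∑' k : ℕ,
        -(k * (z ^ k / Gamma (ρ * k + 1))) * ((1 - b ^ (ρ * k)) / (1 - b)))
      (fun b ↦ (mittagLefflerEuler ρ (z * b ^ ρ) - mittagLefflerEuler ρ z) / (1 - b))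
      (Ioo 0 1) := fun b hb ↦ tsum_mul_one_sub_rpow_div_one_sub hρ z hb.1.le
  obtain ⟨hInt, hsum⟩ := integrable_tsum_and_hasSum_integral
    (fun k ↦ (hcont k).aestronglyMeasurable measurableSet_Ioo) hsummable
    (integrableOn_const (s := Ioo (0 : ℝ) 1) (μ := volume) (C := (1 : ℝ)) (by simp)) <| by
      filter_upwards [self_mem_ae_restrict measurableSet_Ioo] with b hb k
      simpa only [mul_one] using hbound k b hb
  rw [setIntegral_congr_fun measurableSet_Ioo hsum_eq] at hsum
  refine ⟨IntegrableOn.congr_fun hInt hsum_eq measurableSet_Ioo, hsum.congr_fun fun k ↦ ?_⟩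
  rw [integral_const_mul, realHarmonic, neg_mul]

theorem hasDerivAt_mittagLeffler_mul_rpow {ρ t : ℝ} (hρ : 0 < ρ) (ht : 0 < t) (w : ℝ) :
    HasDerivAt (fun s ↦ mittagLeffler s (w * t ^ s))
      ((log t + eulerMascheroniConstant) * mittagLefflerEuler ρ (w * t ^ ρ) +
        ∫ b in Ioo 0 1, (mittagLefflerEuler ρ (w * t ^ ρ * b ^ ρ) -
          mittagLefflerEuler ρ (w * t ^ ρ)) / (1 - b)) ρ := by
  refine (hasDerivAt_mittagLeffler_order hρ ht w).congr_deriv ?_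
  have hsum := (integrableOn_and_hasSum_mittagLefflerEuler_sub_div hρ (w * t ^ ρ)).2
  rw [← hsum.tsum_eq, mittagLefflerEuler, ← tsum_mul_left, ← Summable.tsum_add
    ((summable_mul_pow_div_Gamma hρ _).mul_left _) hsum.summable]
  refine tsum_congr fun k ↦ ?_
  rw [realHarmonic_eq_logDeriv_Gamma (by positivity)]
  ring

/-! ### Hankel's integral in the logarithmic coordinate -/

/-- The closed horizontal strip `|Im z| ≤ π`, onto which the logarithm unrolls the plane slit along
the negative axis. -/
def logStrip : Set ℂ := {z | z.im ∈ Icc (-π) π}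

/-- The integral of `φ dz` up the vertical segment `Re z = R` of `logStrip`, the logarithmic image
of a circle of radius `exp R`. -/
noncomputable def segmentIntegral (φ : ℂ → ℂ) (R : ℝ) : ℂ :=
  Complex.I * ∫ θ in (-π)..π, φ (R + θ * Complex.I)

/-- The jump of `φ` across `logStrip`, from the upper to the lower edge. -/
noncomputable def stripJump (φ : ℂ → ℂ) (s : ℝ) : ℂ :=
  φ (s - π * Complex.I) - φ (s + π * Complex.I)

/-- The integral of `φ dz` along the logarithmic image of a Hankel contour: in along the lower edge
of `logStrip` from `+∞` to abscissa `R`, up to the upper edge, and back to `+∞`. -/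
noncomputable def hankelIntegral (φ : ℂ → ℂ) (R : ℝ) : ℂ :=
  segmentIntegral φ R - ∫ s in Ioi R, stripJump φ s

theorem ofReal_add_mul_I_mem_logStrip {R θ : ℝ} (hθ : θ ∈ Icc (-π) π) :
    (R + θ * Complex.I : ℂ) ∈ logStrip := by
  simpa [logStrip] using hθ

theorem segmentIntegral_eq_add_integral_stripJump {φ : ℂ → ℂ} (hφ : DifferentiableOn ℂ φ logStrip)
    (a R : ℝ) : segmentIntegral φ a = segmentIntegral φ R + ∫ s in a..R, stripJump φ s := by
  have hpi : -π ≤ π := by linarith [pi_pos]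
  have edge_continuous : ∀ y ∈ Icc (-π) π, Continuous fun s : ℝ ↦ φ (s + y * Complex.I) :=
    fun y hy ↦ hφ.continuousOn.comp_continuous (by fun_prop)
      fun s ↦ ofReal_add_mul_I_mem_logStrip hy
  have hlower := edge_continuous (-π) ⟨le_rfl, hpi⟩
  have hupper := edge_continuous π ⟨hpi, le_rfl⟩
  have cauchy := Complex.integral_boundary_rect_eq_zero_of_differentiableOn φ
    (a + (-π : ℝ) * Complex.I) (R + π * Complex.I) (hφ.mono fun z hz ↦ by
      simpa [logStrip, uIcc_of_le hpi] using hz.2)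
  simp only [Complex.add_im, Complex.ofReal_im, Complex.mul_im, Complex.I_im, Complex.ofReal_re,
    Complex.I_re, mul_one, mul_zero, add_zero, zero_add, Complex.add_re, Complex.mul_re,
    smul_eq_mul, sub_self] at cauchy
  simp only [Complex.ofReal_neg, neg_mul, ← sub_eq_add_neg] at cauchy hlower
  simp only [segmentIntegral, stripJump]
  rw [intervalIntegral.integral_sub (hlower.intervalIntegrable _ _)
    (hupper.intervalIntegrable _ _)]
  linear_combination -cauchy

theorem hankelIntegral_eq_sub_integral_stripJump {φ : ℂ → ℂ} (hφ : DifferentiableOn ℂ φ logStrip)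
    {L : ℂ} (hjump : Integrable (stripJump φ))
    (hL : Tendsto (segmentIntegral φ) atBot (𝓝 L)) (R : ℝ) :
    hankelIntegral φ R = L - ∫ s, stripJump φ s := by
  have hlim : Tendsto (segmentIntegral φ) atBot
      (𝓝 (segmentIntegral φ R + ∫ s in Iic R, stripJump φ s)) :=
    ((intervalIntegral_tendsto_integral_Iic R hjump.integrableOn tendsto_id).const_add
      (segmentIntegral φ R)).congr fun a ↦
        (segmentIntegral_eq_add_integral_stripJump hφ a R).symm
  have hsplit := integral_add_compl (measurableSet_Iic (a := R)) hjump
  rw [compl_Iic] at hsplit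
  rw [tendsto_nhds_unique hL hlim, ← hsplit, hankelIntegral]
  ring

theorem tendsto_segmentIntegral_atBot {φ : ℂ → ℂ} (hφ : DifferentiableOn ℂ φ logStrip)
    {c : ℂ} {C δ R₀ : ℝ} (hδ : 0 < δ)
    (hbound : ∀ R ≤ R₀, ∀ θ : ℝ, ‖φ (R + θ * Complex.I) - c‖ ≤ C * exp (δ * R)) :
    Tendsto (segmentIntegral φ) atBot (𝓝 (2 * π * Complex.I * c)) := by
  have hpi : -π ≤ π := by linarith [pi_pos]
  rw [tendsto_iff_norm_sub_tendsto_zero]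
  have hlim : Tendsto (fun R : ℝ ↦ C * exp (δ * R) * (2 * π)) atBot (𝓝 0) := by
    simpa using ((tendsto_exp_atBot.comp
      (tendsto_id.const_mul_atBot hδ)).const_mul C).mul_const (2 * π)
  refine squeeze_zero' (Eventually.of_forall fun _ ↦ norm_nonneg _) ?_ hlim
  filter_upwards [eventually_le_atBot R₀] with R hR
  have hcont : ContinuousOn (fun θ : ℝ ↦ φ (R + θ * Complex.I)) (uIcc (-π) π) :=
    hφ.continuousOn.comp (by fun_prop) fun θ hθ ↦
      ofReal_add_mul_I_mem_logStrip (uIcc_of_le hpi ▸ hθ)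
  have hsub : segmentIntegral φ R - 2 * π * Complex.I * c =
      Complex.I * ∫ θ in (-π)..π, (φ (R + θ * Complex.I) - c) := by
    rw [intervalIntegral.integral_sub hcont.intervalIntegrable (by simp), segmentIntegral]
    simp only [intervalIntegral.integral_const, sub_neg_eq_add, Complex.real_smul]
    push_cast
    ring
  rw [hsub, norm_mul, Complex.norm_I, one_mul]
  refine (intervalIntegral.norm_integral_le_of_norm_le_const fun θ _ ↦ hbound R hR θ).trans_eq ?_
  rw [abs_of_pos (by linarith [pi_pos])]
  ring

/-- The integrand `exp u · u ^ (-μ - 1) du` of Hankel's formula for `1 / Γ(μ + 1)`, with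
`u = τ exp z` and without the constant factor `τ ^ (-μ)`. -/
noncomputable def hankelKernel (τ μ : ℝ) (z : ℂ) : ℂ := Complex.exp (τ * Complex.exp z - μ * z)

/-- The modulus of `hankelKernel` on the two edges of `logStrip`. -/
noncomputable def edgeKernel (τ μ s : ℝ) : ℝ := exp (-(τ * exp s) - μ * s)

theorem hankelKernel_sub_one (τ μ : ℝ) (z : ℂ) :
    hankelKernel τ (μ - 1) z = Complex.exp z * hankelKernel τ μ z := by
  rw [hankelKernel, hankelKernel, ← Complex.exp_add]
  push_cast
  ring_nf

theorem hasDerivAt_hankelKernel (τ μ : ℝ) (z : ℂ) :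
    HasDerivAt (hankelKernel τ μ) (τ * hankelKernel τ (μ - 1) z - μ * hankelKernel τ μ z) z := by
  refine ((((Complex.hasDerivAt_exp z).const_mul (τ : ℂ)).sub
    ((hasDerivAt_id z).const_mul (μ : ℂ))).cexp).congr_deriv ?_
  rw [hankelKernel_sub_one]
  simp only [hankelKernel, Pi.sub_apply, id_eq]
  ring

theorem differentiable_hankelKernel (τ μ : ℝ) : Differentiable ℂ (hankelKernel τ μ) :=
  fun z ↦ (hasDerivAt_hankelKernel τ μ z).differentiableAt

theorem edgeKernel_sub_one (τ μ s : ℝ) : edgeKernel τ (μ - 1) s = exp s * edgeKernel τ μ s := by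
  rw [edgeKernel, edgeKernel, ← exp_add]
  ring_nf

theorem hasDerivAt_edgeKernel (τ μ s : ℝ) :
    HasDerivAt (edgeKernel τ μ) (-(τ * edgeKernel τ (μ - 1) s + μ * edgeKernel τ μ s)) s := by
  refine ((((hasDerivAt_exp s).const_mul τ).neg.sub
    ((hasDerivAt_id s).const_mul μ)).exp).congr_deriv ?_
  rw [edgeKernel_sub_one]
  simp only [edgeKernel, Pi.sub_apply, Pi.neg_apply, id_eq]
  ring

theorem continuous_edgeKernel (τ μ : ℝ) : Continuous (edgeKernel τ μ) := by
  unfold edgeKernel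
  fun_prop

theorem exp_neg_mul_sub_pi_mul_I (α s : ℝ) : Complex.exp (-(α * (s - π * Complex.I))) =
    exp (-(α * s)) * (cos (α * π) + sin (α * π) * Complex.I) := by
  push_cast
  rw [← Complex.exp_mul_I, ← Complex.exp_add]
  ring_nf

theorem exp_neg_mul_add_pi_mul_I (α s : ℝ) : Complex.exp (-(α * (s + π * Complex.I))) =
    exp (-(α * s)) * (cos (α * π) - sin (α * π) * Complex.I) := by
  have hconj : cos (α * π) - sin (α * π) * Complex.I =
      Complex.cos (-(α * π)) + Complex.sin (-(α * π)) * Complex.I := by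
    rw [Complex.cos_neg, Complex.sin_neg]
    push_cast
    ring
  rw [hconj, Complex.ofReal_exp, ← Complex.exp_mul_I, ← Complex.exp_add]
  push_cast
  ring_nf

theorem stripJump_hankelKernel (τ μ s : ℝ) :
    stripJump (hankelKernel τ μ) s = edgeKernel τ μ s * (2 * sin (μ * π) * Complex.I) := by
  simp only [stripJump, hankelKernel, edgeKernel]
  rw [sub_eq_add_neg (_ * _), sub_eq_add_neg (_ * _), sub_eq_add_neg (-(τ * exp s)),
    Complex.exp_add, Complex.exp_add, exp_add, exp_neg_mul_sub_pi_mul_I, exp_neg_mul_add_pi_mul_I,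
    Complex.exp_sub_pi_mul_I, Complex.exp_add_pi_mul_I]
  push_cast
  ring_nf

theorem integrable_edgeKernel_and_integral {τ μ : ℝ} (hτ : 0 < τ) (hμ : μ < 0) :
    Integrable (edgeKernel τ μ) ∧ ∫ s, edgeKernel τ μ s = τ ^ μ * Gamma (-μ) := by
  let g : ℝ → ℝ := fun t ↦ t ^ (-μ - 1) * exp (-(τ * t))
  have himage : exp '' univ = Ioi 0 := by rw [image_univ, range_exp]
  have hderiv : ∀ s ∈ (univ : Set ℝ), HasDerivWithinAt exp (exp s) univ s :=
    fun s _ ↦ (hasDerivAt_exp s).hasDerivWithinAt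
  have hsubst : ∀ s, |exp s| • g (exp s) = edgeKernel τ μ s := fun s ↦ by
    simp only [g, smul_eq_mul, edgeKernel, abs_of_pos (exp_pos s)]
    rw [← exp_mul, ← exp_add, ← exp_add]
    ring_nf
  have hg : IntegrableOn g (exp '' univ) := by
    simpa [himage, g] using
      integrableOn_rpow_mul_exp_neg_mul_rpow (p := 1) (s := -μ - 1) (by linarith) one_pos hτ
  constructor
  · simpa only [hsubst, integrableOn_univ] using
      (integrableOn_image_iff_integrableOn_abs_deriv_smul MeasurableSet.univ hderiv
        exp_injective.injOn g).1 hg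
  · have hcov := integral_image_eq_integral_abs_deriv_smul MeasurableSet.univ hderiv
      exp_injective.injOn g
    simp only [hsubst, himage, setIntegral_univ] at hcov
    rw [← hcov, integral_rpow_mul_exp_neg_mul_Ioi (by linarith) hτ, one_div, inv_rpow hτ.le,
      rpow_neg hτ.le, inv_inv]

theorem integrableOn_edgeKernel_Ioi {τ : ℝ} (hτ : 0 < τ) (μ R : ℝ) :
    IntegrableOn (edgeKernel τ μ) (Ioi R) := by
  rcases lt_or_ge μ 0 with hμ | hμ
  · exact (integrable_edgeKernel_and_integral hτ hμ).1.integrableOn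
  · have hdominating : IntegrableOn (edgeKernel τ (-1)) (Ioi R) :=
      (integrable_edgeKernel_and_integral hτ neg_one_lt_zero).1.integrableOn
    refine Integrable.mono' (hdominating.const_mul (exp (-(μ + 1) * R)))
      (continuous_edgeKernel τ μ).aestronglyMeasurable ?_
    filter_upwards [self_mem_ae_restrict measurableSet_Ioi] with s hs
    rw [edgeKernel, edgeKernel, norm_of_nonneg (exp_pos _).le, ← exp_add, exp_le_exp]
    nlinarith [mem_Ioi.1 hs]

theorem segmentIntegral_hankelKernel_sub_one (τ μ R : ℝ) :
    τ * segmentIntegral (hankelKernel τ (μ - 1)) R - μ * segmentIntegral (hankelKernel τ μ) R =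
      -stripJump (hankelKernel τ μ) R := by
  have hderiv : ∀ θ : ℝ, HasDerivAt (fun θ : ℝ ↦ hankelKernel τ μ (R + θ * Complex.I))
      ((τ * hankelKernel τ (μ - 1) (R + θ * Complex.I) -
        μ * hankelKernel τ μ (R + θ * Complex.I)) * Complex.I) θ := fun θ ↦ by
    have hpath : HasDerivAt (fun θ : ℝ ↦ (R : ℂ) + θ * Complex.I) Complex.I θ := by
      simpa using ((Complex.ofRealCLM.hasDerivAt (x := θ)).mul_const Complex.I).const_add (R : ℂ)
    exact (hasDerivAt_hankelKernel τ μ _).comp θ hpath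
  have hInt : ∀ ν, IntervalIntegrable (fun θ : ℝ ↦ hankelKernel τ ν (R + θ * Complex.I))
      volume (-π) π := fun ν ↦
    ((differentiable_hankelKernel τ ν).continuous.comp (by fun_prop)).intervalIntegrable _ _
  have hftc := intervalIntegral.integral_eq_sub_of_hasDerivAt (a := -π) (b := π)
    (fun θ _ ↦ hderiv θ)
    ((((hInt (μ - 1)).const_mul _).sub ((hInt μ).const_mul _)).mul_const _)
  rw [intervalIntegral.integral_mul_const, intervalIntegral.integral_sub
    ((hInt (μ - 1)).const_mul _) ((hInt μ).const_mul _), intervalIntegral.integral_const_mul,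
    intervalIntegral.integral_const_mul] at hftc
  simp only [Complex.ofReal_neg, neg_mul, ← sub_eq_add_neg] at hftc
  rw [segmentIntegral, segmentIntegral, stripJump]
  linear_combination hftc

theorem integral_edgeKernel_sub_one {τ : ℝ} (hτ : 0 < τ) (μ R : ℝ) :
    τ * (∫ s in Ioi R, edgeKernel τ (μ - 1) s) + μ * ∫ s in Ioi R, edgeKernel τ μ s =
      edgeKernel τ μ R := by
  have hInt := integrableOn_edgeKernel_Ioi hτ
  have hInt' : IntegrableOn (fun s ↦ -(τ * edgeKernel τ (μ - 1) s + μ * edgeKernel τ μ s))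
      (Ioi R) := (((hInt (μ - 1) R).const_mul τ).add ((hInt μ R).const_mul μ)).neg
  have hlim : Tendsto (edgeKernel τ μ) atTop (𝓝 0) :=
    tendsto_zero_of_hasDerivAt_of_integrableOn_Ioi (fun s _ ↦ hasDerivAt_edgeKernel τ μ s) hInt'
      (hInt μ R)
  have hftc := integral_Ioi_of_hasDerivAt_of_tendsto (continuous_edgeKernel τ μ).continuousWithinAt
    (fun s _ ↦ hasDerivAt_edgeKernel τ μ s) hInt' hlim
  rw [integral_neg, integral_add ((hInt (μ - 1) R).const_mul τ) ((hInt μ R).const_mul μ),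
    integral_const_mul, integral_const_mul] at hftc
  linarith

theorem integral_stripJump_hankelKernel (τ μ : ℝ) (S : Set ℝ) :
    ∫ s in S, stripJump (hankelKernel τ μ) s =
      (∫ s in S, edgeKernel τ μ s : ℝ) * (2 * sin (μ * π) * Complex.I) := by
  simp_rw [stripJump_hankelKernel]
  rw [integral_mul_const, integral_complex_ofReal]

theorem hankelIntegral_hankelKernel_sub_one {τ : ℝ} (hτ : 0 < τ) (μ R : ℝ) :
    τ * hankelIntegral (hankelKernel τ (μ - 1)) R = μ * hankelIntegral (hankelKernel τ μ) R := by
  have hedge := congrArg ((↑) : ℝ → ℂ) (integral_edgeKernel_sub_one hτ μ R)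
  have hsin : sin ((μ - 1) * π) = -sin (μ * π) := by rw [sub_mul, one_mul, sin_sub_pi]
  have hsegment := segmentIntegral_hankelKernel_sub_one τ μ R
  rw [stripJump_hankelKernel] at hsegment
  rw [hankelIntegral, hankelIntegral, integral_stripJump_hankelKernel,
    integral_stripJump_hankelKernel, hsin]
  push_cast at hedge hsegment ⊢
  linear_combination hsegment + 2 * Complex.sin (μ * π) * Complex.I * hedge

theorem norm_hankelKernel_le {τ : ℝ} (hτ : 0 ≤ τ) (μ R θ : ℝ) :
    ‖hankelKernel τ μ (R + θ * Complex.I)‖ ≤ exp (τ * exp R - μ * R) := by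
  have hre : (τ * Complex.exp (R + θ * Complex.I)).re ≤ τ * exp R := by
    rw [Complex.re_ofReal_mul]
    refine mul_le_mul_of_nonneg_left ((Complex.re_le_norm _).trans_eq ?_) hτ
    simp [Complex.norm_exp]
  rw [hankelKernel, Complex.norm_exp, exp_le_exp, Complex.sub_re]
  simpa using hre

theorem hankelIntegral_hankelKernel_of_neg {τ μ : ℝ} (hτ : 0 < τ) (hμ : -1 < μ) (hμ' : μ < 0)
    (R : ℝ) : hankelIntegral (hankelKernel τ μ) R =
      2 * π * Complex.I * (τ ^ μ / Gamma (μ + 1) : ℝ) := by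
  have hdiff := (differentiable_hankelKernel τ μ).differentiableOn (s := logStrip)
  obtain ⟨hInt, hval⟩ := integrable_edgeKernel_and_integral hτ hμ'
  have hjump : Integrable (stripJump (hankelKernel τ μ)) :=
    (hInt.ofReal.mul_const (2 * sin (μ * π) * Complex.I)).congr
      (.of_forall fun s ↦ (stripJump_hankelKernel τ μ s).symm)
  have hsegment := tendsto_segmentIntegral_atBot hdiff (c := 0) (C := exp τ) (R₀ := 0)
    (neg_pos.2 hμ') fun R hR θ ↦ by
      rw [sub_zero, ← exp_add]
      refine (norm_hankelKernel_le hτ.le μ R θ).trans (exp_le_exp.2 ?_)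
      nlinarith [exp_le_one_iff.2 hR]
  have hreflection : -(τ ^ μ * Gamma (-μ) * sin (μ * π)) = π * (τ ^ μ / Gamma (μ + 1)) := by
    have hsin : 0 < -sin (μ * π) := by
      rw [← sin_neg, ← neg_mul]
      exact sin_pos_of_pos_of_lt_pi (by nlinarith [pi_pos]) (by nlinarith [pi_pos])
    have hGamma : 0 < Gamma (μ + 1) := Gamma_pos_of_pos (by linarith)
    have h := Gamma_mul_Gamma_one_sub (-μ)
    rw [sub_neg_eq_add, add_comm 1 μ, mul_neg, sin_neg, mul_comm π, eq_div_iff hsin.ne'] at h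
    field_simp
    linear_combination h
  have hreflection' := congrArg ((↑) : ℝ → ℂ) hreflection
  rw [hankelIntegral_eq_sub_integral_stripJump hdiff hjump hsegment R, ← setIntegral_univ,
    integral_stripJump_hankelKernel, setIntegral_univ, hval]
  push_cast at hreflection' ⊢
  linear_combination 2 * Complex.I * hreflection'

theorem hankelIntegral_hankelKernel_zero {τ : ℝ} (hτ : 0 < τ) (R : ℝ) :
    hankelIntegral (hankelKernel τ 0) R = 2 * π * Complex.I := by
  have hdiff := (differentiable_hankelKernel τ 0).differentiableOn (s := logStrip)
  have hjump : stripJump (hankelKernel τ 0) = 0 := by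
    funext s
    simp [stripJump_hankelKernel]
  have hsegment := tendsto_segmentIntegral_atBot hdiff (c := 1) (C := 2 * τ) (R₀ := -log τ)
    one_pos fun R hR θ ↦ by
      have hnorm : ‖(τ : ℂ) * Complex.exp (R + θ * Complex.I)‖ = τ * exp R := by
        simp [Complex.norm_exp, abs_of_pos hτ]
      have hsmall : τ * exp R ≤ 1 := by
        calc τ * exp R ≤ τ * exp (-log τ) := by gcongr
          _ = 1 := by rw [exp_neg, exp_log hτ, mul_inv_cancel₀ hτ.ne']
      have hexp := Complex.norm_exp_sub_one_le (hnorm.trans_le hsmall)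
      rw [hnorm, ← mul_assoc] at hexp
      simpa [hankelKernel] using hexp
  rw [hankelIntegral_eq_sub_integral_stripJump hdiff (by simp [hjump]) hsegment R, hjump]
  simp

theorem hankelIntegral_hankelKernel_add_natCast {τ μ : ℝ} (hτ : 0 < τ) (hμ : -1 < μ) (hμ' : μ ≤ 0)
    (R : ℝ) (n : ℕ) : hankelIntegral (hankelKernel τ (μ + n)) R =
      2 * π * Complex.I * (τ ^ (μ + n) / Gamma (μ + n + 1) : ℝ) := by
  induction n with
  | zero =>
    rcases hμ'.lt_or_eq with hneg | rfl
    · simpa using hankelIntegral_hankelKernel_of_neg hτ hμ hneg R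
    · simpa using hankelIntegral_hankelKernel_zero hτ R
  | succ n ih =>
    have hpos : 0 < μ + n + 1 := by linarith [n.cast_nonneg (α := ℝ)]
    have hrec := hankelIntegral_hankelKernel_sub_one hτ (μ + n + 1) R
    rw [add_sub_cancel_right, ih] at hrec
    have hGamma : τ * (τ ^ (μ + n) / Gamma (μ + n + 1)) =
        (μ + n + 1) * (τ ^ (μ + n + 1) / Gamma (μ + n + 1 + 1)) := by
      have := (Gamma_pos_of_pos hpos).ne'
      rw [Gamma_add_one hpos.ne', rpow_add_one hτ.ne']
      field_simp
    have hGamma' := congrArg ((↑) : ℝ → ℂ) hGamma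
    rw [Nat.cast_succ, ← add_assoc]
    refine mul_left_cancel₀ (Complex.ofReal_ne_zero.2 hpos.ne') (hrec.symm.trans ?_)
    rw [Complex.ofReal_mul, Complex.ofReal_mul] at hGamma'
    linear_combination 2 * π * Complex.I * hGamma'

theorem hankelIntegral_hankelKernel {τ μ : ℝ} (hτ : 0 < τ) (hμ : 0 ≤ μ) (R : ℝ) :
    hankelIntegral (hankelKernel τ μ) R = 2 * π * Complex.I * (τ ^ μ / Gamma (μ + 1) : ℝ) := by
  have h := hankelIntegral_hankelKernel_add_natCast hτ (μ := μ - ⌈μ⌉₊)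
    (by linarith [Nat.ceil_lt_add_one hμ]) (by linarith [Nat.le_ceil μ]) R ⌈μ⌉₊
  rwa [sub_add_cancel] at h

/-! ### The spectral representation -/

/-- The integrand, in the coordinate of `hankelKernel`, of the inverse Laplace transform of
`u ^ (ρ - 1) / (u ^ ρ + 1)`, whose value at `τ` is `E_ρ(-τ ^ ρ)`. -/
noncomputable def resolventKernel (ρ τ : ℝ) (z : ℂ) : ℂ :=
  Complex.exp (τ * Complex.exp z) / (1 + Complex.exp (-(ρ * z)))

/-- The denominator `|y + e^{iρπ}|²` of the spectral density. -/
noncomputable def spectralDenominator (ρ y : ℝ) : ℝ := y ^ 2 + 2 * y * cos (ρ * π) + 1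

/-- The density, in the logarithmic coordinate, of the positive measure whose Laplace transform is
`τ ↦ E_ρ(-τ ^ ρ)`. -/
noncomputable def spectralDensity (ρ s : ℝ) : ℝ :=
  sin (ρ * π) / π * exp (ρ * s) / spectralDenominator ρ (exp (ρ * s))

/-- The Laplace transform at `τ` of `u ^ n` times the spectral measure, up to sign the `n`-th
derivative of `τ ↦ E_ρ(-τ ^ ρ)`. -/
noncomputable def spectralMoment (ρ : ℝ) (n : ℕ) (τ : ℝ) : ℝ :=
  ∫ s, exp s ^ n * exp (-(τ * exp s)) * spectralDensity ρ s

theorem sin_mul_pi_pos {ρ : ℝ} (hρ : ρ ∈ Ioo (0 : ℝ) 1) : 0 < sin (ρ * π) :=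
  sin_pos_of_pos_of_lt_pi (mul_pos hρ.1 pi_pos) (mul_lt_of_lt_one_left pi_pos hρ.2)

theorem sin_sq_le_spectralDenominator (ρ y : ℝ) : sin (ρ * π) ^ 2 ≤ spectralDenominator ρ y := by
  unfold spectralDenominator
  nlinarith [sin_sq_add_cos_sq (ρ * π), sq_nonneg (y + cos (ρ * π))]

theorem spectralDenominator_pos {ρ : ℝ} (hρ : ρ ∈ Ioo (0 : ℝ) 1) (y : ℝ) :
    0 < spectralDenominator ρ y :=
  (pow_pos (sin_mul_pi_pos hρ) 2).trans_le (sin_sq_le_spectralDenominator ρ y)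

theorem spectralDensity_nonneg {ρ : ℝ} (hρ : ρ ∈ Ioo (0 : ℝ) 1) (s : ℝ) :
    0 ≤ spectralDensity ρ s := by
  have := sin_mul_pi_pos hρ
  have := spectralDenominator_pos hρ (exp (ρ * s))
  unfold spectralDensity
  positivity

theorem spectralDensity_le_div_sin {ρ : ℝ} (hρ : ρ ∈ Ioo (0 : ℝ) 1) (s : ℝ) :
    spectralDensity ρ s ≤ 1 / (π * sin (ρ * π)) * exp (ρ * s) := by
  have hsin := sin_mul_pi_pos hρ
  calc spectralDensity ρ s ≤ sin (ρ * π) / π * exp (ρ * s) / sin (ρ * π) ^ 2 := by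
        unfold spectralDensity
        gcongr
        exact sin_sq_le_spectralDenominator _ _
    _ = 1 / (π * sin (ρ * π)) * exp (ρ * s) := by field_simp

theorem continuous_spectralDensity {ρ : ℝ} (hρ : ρ ∈ Ioo (0 : ℝ) 1) :
    Continuous (spectralDensity ρ) := by
  have hden : Continuous (spectralDenominator ρ) := by
    unfold spectralDenominator
    fun_prop
  exact (by fun_prop : Continuous fun s ↦ sin (ρ * π) / π * exp (ρ * s)).div (by fun_prop)
    fun s ↦ (spectralDenominator_pos hρ _).ne'

theorem integrable_spectralMoment {ρ τ : ℝ} (hρ : ρ ∈ Ioo (0 : ℝ) 1) (hτ : 0 < τ) (n : ℕ) :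
    Integrable fun s ↦ exp s ^ n * exp (-(τ * exp s)) * spectralDensity ρ s := by
  have hn : -(n + ρ) < 0 := by linarith [hρ.1, n.cast_nonneg (α := ℝ)]
  refine ((integrable_edgeKernel_and_integral hτ hn).1.const_mul (1 / (π * sin (ρ * π)))).mono' ?_
    (.of_forall fun s ↦ ?_)
  · have := continuous_spectralDensity hρ
    exact (by fun_prop : Continuous _).aestronglyMeasurable
  · rw [norm_of_nonneg (mul_nonneg (by positivity) (spectralDensity_nonneg hρ s))]
    calc exp s ^ n * exp (-(τ * exp s)) * spectralDensity ρ s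
        ≤ exp s ^ n * exp (-(τ * exp s)) * (1 / (π * sin (ρ * π)) * exp (ρ * s)) := by
          gcongr
          exact spectralDensity_le_div_sin hρ s
      _ = 1 / (π * sin (ρ * π)) * edgeKernel τ (-(n + ρ)) s := by
          rw [edgeKernel, mul_left_comm, ← exp_nat_mul, ← exp_add, ← exp_add]
          ring_nf

theorem one_add_exp_neg_mul_ne_zero {ρ : ℝ} (hρ : ρ ∈ Ioo (0 : ℝ) 1) {z : ℂ} (hz : z ∈ logStrip) :
    1 + Complex.exp (-(ρ * z)) ≠ 0 := by
  intro h
  obtain ⟨hlower, hupper⟩ : -π ≤ z.im ∧ z.im ≤ π := hz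
  have hpi := pi_pos
  have him : (-(ρ * z : ℂ)).im = -(ρ * z.im) := by simp
  have hlog := Complex.log_exp (x := -(ρ * z)) (by rw [him]; nlinarith [hρ.1, hρ.2])
    (by rw [him]; nlinarith [hρ.1, hρ.2])
  rw [eq_neg_of_add_eq_zero_right h, Complex.log_neg_one] at hlog
  have : π = -(ρ * z.im) := by simpa using congrArg Complex.im hlog
  nlinarith [hρ.1, hρ.2]

theorem differentiableOn_resolventKernel {ρ : ℝ} (hρ : ρ ∈ Ioo (0 : ℝ) 1) (τ : ℝ) :
    DifferentiableOn ℂ (resolventKernel ρ τ) logStrip :=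
  (by fun_prop : DifferentiableOn ℂ (fun z ↦ Complex.exp (τ * Complex.exp z)) logStrip).div
    (by fun_prop) fun _ hz ↦ one_add_exp_neg_mul_ne_zero hρ hz

theorem stripJump_resolventKernel {ρ : ℝ} (hρ : ρ ∈ Ioo (0 : ℝ) 1) (τ s : ℝ) :
    stripJump (resolventKernel ρ τ) s =
      -(2 * π * Complex.I) * (exp (-(τ * exp s)) * spectralDensity ρ s : ℝ) := by
  have hpi := pi_pos
  have hlower : 1 + Complex.exp (-(ρ * (s - π * Complex.I))) ≠ 0 :=
    one_add_exp_neg_mul_ne_zero hρ (by simp [logStrip, hpi.le])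
  have hupper : 1 + Complex.exp (-(ρ * (s + π * Complex.I))) ≠ 0 :=
    one_add_exp_neg_mul_ne_zero hρ (by simp [logStrip, hpi.le])
  have hden : (spectralDenominator ρ (exp (ρ * s)) : ℂ) ≠ 0 :=
    Complex.ofReal_ne_zero.2 (spectralDenominator_pos hρ _).ne'
  have hpi_ne : (π : ℂ) ≠ 0 := Complex.ofReal_ne_zero.2 pi_ne_zero
  have hexp_ne : (exp (ρ * s) : ℂ) ≠ 0 := Complex.ofReal_ne_zero.2 (exp_ne_zero _)
  have hsq : (sin (ρ * π) : ℂ) ^ 2 + (cos (ρ * π) : ℂ) ^ 2 = 1 := by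
    exact_mod_cast sin_sq_add_cos_sq (ρ * π)
  rw [exp_neg_mul_sub_pi_mul_I, exp_neg, Complex.ofReal_inv] at hlower
  rw [exp_neg_mul_add_pi_mul_I, exp_neg, Complex.ofReal_inv] at hupper
  simp only [stripJump, resolventKernel, spectralDensity, spectralDenominator] at hden ⊢
  rw [exp_neg_mul_sub_pi_mul_I, exp_neg_mul_add_pi_mul_I, exp_neg, Complex.ofReal_inv,
    Complex.exp_sub_pi_mul_I, Complex.exp_add_pi_mul_I, mul_neg, ← Complex.ofReal_exp,
    ← Complex.ofReal_mul, ← Complex.ofReal_neg, ← Complex.ofReal_exp]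
  simp only [Complex.ofReal_mul, Complex.ofReal_div, Complex.ofReal_add, Complex.ofReal_pow,
    Complex.ofReal_ofNat, Complex.ofReal_one] at hden ⊢
  generalize (exp (ρ * s) : ℂ) = q at *
  generalize (cos (ρ * π) : ℂ) = c at *
  generalize (sin (ρ * π) : ℂ) = S at *
  have hprod : (1 + q⁻¹ * (c + S * Complex.I)) * (1 + q⁻¹ * (c - S * Complex.I)) =
      (q ^ 2 + 2 * q * c + 1) / q ^ 2 := by
    field_simp
    linear_combination hsq - S ^ 2 * Complex.I_sq
  rw [div_sub_div _ _ hlower hupper, hprod]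
  field_simp
  ring

theorem exp_neg_mul_le_one_half_pow {ρ s : ℝ} (hρ : 0 < ρ) (hs : log 2 / ρ ≤ s) (k : ℕ) :
    exp (-(ρ * k * s)) ≤ (1 / 2) ^ k := by
  have hhalf : exp (-(ρ * s)) ≤ 1 / 2 := by
    rw [div_le_iff₀' hρ] at hs
    calc exp (-(ρ * s)) ≤ exp (-log 2) := by gcongr
      _ = 1 / 2 := by rw [exp_neg, exp_log two_pos, one_div]
  calc exp (-(ρ * k * s)) = exp (-(ρ * s)) ^ k := by
        rw [← exp_nat_mul]
        ring_nf
    _ ≤ (1 / 2) ^ k := by gcongr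

theorem hasSum_hankelKernel {ρ : ℝ} (hρ : 0 < ρ) (τ : ℝ) {z : ℂ} (hz : log 2 / ρ ≤ z.re) :
    HasSum (fun k : ℕ ↦ (-1) ^ k * hankelKernel τ (ρ * k) z) (resolventKernel ρ τ z) := by
  have hnorm : ‖-Complex.exp (-(ρ * z))‖ < 1 := by
    have := exp_neg_mul_le_one_half_pow hρ hz 1
    have hre : (-(ρ * z)).re = -(ρ * (1 : ℕ) * z.re) := by simp
    rw [norm_neg, Complex.norm_exp, hre]
    exact this.trans_lt (by norm_num)
  have hgeom := (hasSum_geometric_of_norm_lt_one hnorm).mul_left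
    (Complex.exp (τ * Complex.exp z))
  rw [sub_neg_eq_add, ← div_eq_mul_inv] at hgeom
  refine hgeom.congr_fun fun k ↦ ?_
  rw [hankelKernel, neg_pow (Complex.exp _), ← Complex.exp_nat_mul, mul_left_comm,
    ← Complex.exp_add]
  push_cast
  ring_nf

theorem hasSum_segmentIntegral_hankelKernel {ρ τ : ℝ} (hρ : 0 < ρ) (hτ : 0 ≤ τ) :
    HasSum (fun k : ℕ ↦ (-1) ^ k * segmentIntegral (hankelKernel τ (ρ * k)) (log 2 / ρ))
      (segmentIntegral (resolventKernel ρ τ) (log 2 / ρ)) := by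
  set R := log 2 / ρ
  have hsum : HasSum
      (fun k : ℕ ↦ ∫ θ in (-π)..π, (-1) ^ k * hankelKernel τ (ρ * k) (R + θ * Complex.I))
      (∫ θ in (-π)..π, resolventKernel ρ τ (R + θ * Complex.I)) := by
    refine intervalIntegral.hasSum_integral_of_dominated_convergence
      (fun k _ ↦ exp (τ * exp R) * (1 / 2) ^ k) (fun k ↦ ?_)
      (fun k ↦ .of_forall fun θ _ ↦ ?_)
      (.of_forall fun _ _ ↦ summable_geometric_two.mul_left _) (by simp)
      (.of_forall fun θ _ ↦ hasSum_hankelKernel hρ τ <| by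
        rw [Complex.add_re, Complex.ofReal_re, Complex.re_ofReal_mul, Complex.I_re, mul_zero,
          add_zero])
    · have := (differentiable_hankelKernel τ (ρ * k)).continuous
      exact (by fun_prop : Continuous _).aestronglyMeasurable
    · calc ‖(-1) ^ k * hankelKernel τ (ρ * k) (R + θ * Complex.I)‖
          = ‖hankelKernel τ (ρ * k) (R + θ * Complex.I)‖ := by simp
        _ ≤ exp (τ * exp R) * exp (-(ρ * k * R)) := by
          rw [← exp_add]
          exact norm_hankelKernel_le hτ _ _ _
        _ ≤ exp (τ * exp R) * (1 / 2) ^ k := by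
          gcongr
          exact exp_neg_mul_le_one_half_pow hρ le_rfl k
  refine (hsum.mul_left Complex.I).congr_fun fun k ↦ ?_
  rw [segmentIntegral, intervalIntegral.integral_const_mul, mul_left_comm]

theorem hasSum_integral_stripJump_hankelKernel {ρ τ : ℝ} (hρ : 0 < ρ) (hτ : 0 < τ) :
    HasSum (fun k : ℕ ↦ (-1) ^ k * ∫ s in Ioi (log 2 / ρ), stripJump (hankelKernel τ (ρ * k)) s)
      (∫ s in Ioi (log 2 / ρ), stripJump (resolventKernel ρ τ) s) := by
  have hsum : HasSum
      (fun k : ℕ ↦ ∫ s in Ioi (log 2 / ρ), (-1) ^ k * stripJump (hankelKernel τ (ρ * k)) s)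
      (∫ s in Ioi (log 2 / ρ), stripJump (resolventKernel ρ τ) s) := by
    refine hasSum_integral_of_dominated_convergence
      (fun k s ↦ 2 * edgeKernel τ 0 s * (1 / 2) ^ k) (fun k ↦ ?_) (fun k ↦ ?_)
      (.of_forall fun _ ↦ summable_geometric_two.mul_left _) ?_ ?_
    · have := (differentiable_hankelKernel τ (ρ * k)).continuous
      unfold stripJump
      exact (by fun_prop : Continuous _).aestronglyMeasurable
    · filter_upwards [self_mem_ae_restrict measurableSet_Ioi] with s hs
      calc ‖(-1) ^ k * stripJump (hankelKernel τ (ρ * k)) s‖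
          = edgeKernel τ (ρ * k) s * (2 * |sin (ρ * k * π)|) := by
            rw [stripJump_hankelKernel]
            simp [edgeKernel, -Complex.ofReal_exp, -Complex.ofReal_sin]
        _ ≤ edgeKernel τ (ρ * k) s * (2 * 1) := by
            gcongr
            · exact (exp_pos _).le
            · exact abs_sin_le_one _
        _ = 2 * edgeKernel τ 0 s * exp (-(ρ * k * s)) := by
            rw [edgeKernel, edgeKernel, zero_mul, sub_zero, sub_eq_add_neg, exp_add]
            ring
        _ ≤ 2 * edgeKernel τ 0 s * (1 / 2) ^ k := by
            gcongr
            · exact mul_nonneg two_pos.le (exp_pos _).le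
            · exact exp_neg_mul_le_one_half_pow hρ (mem_Ioi.1 hs).le k
    · simp only [tsum_mul_left]
      exact ((integrableOn_edgeKernel_Ioi hτ 0 _).const_mul 2).mul_const _
    · filter_upwards [self_mem_ae_restrict measurableSet_Ioi] with s hs
      simp only [stripJump, mul_sub]
      exact (hasSum_hankelKernel hρ τ (by simpa using (mem_Ioi.1 hs).le)).sub
        (hasSum_hankelKernel hρ τ (by simpa using (mem_Ioi.1 hs).le))
  refine hsum.congr_fun fun k ↦ ?_
  rw [integral_const_mul]

theorem neg_rpow_pow_div_Gamma (ρ : ℝ) {τ : ℝ} (hτ : 0 ≤ τ) (k : ℕ) :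
    (-τ ^ ρ) ^ k / Gamma (ρ * k + 1) = (-1) ^ k * (τ ^ (ρ * k) / Gamma (ρ * k + 1)) := by
  rw [← neg_one_mul, mul_rpow_pow_div_Gamma _ hτ, div_mul_eq_mul_div, mul_div_assoc]

theorem hankelIntegral_resolventKernel {ρ τ : ℝ} (hρ : 0 < ρ) (hτ : 0 < τ) :
    hankelIntegral (resolventKernel ρ τ) (log 2 / ρ) =
      2 * π * Complex.I * mittagLeffler ρ (-τ ^ ρ) := by
  have hcontour : HasSum
      (fun k : ℕ ↦ (-1) ^ k * hankelIntegral (hankelKernel τ (ρ * k)) (log 2 / ρ))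
      (hankelIntegral (resolventKernel ρ τ) (log 2 / ρ)) := by
    simpa only [hankelIntegral, mul_sub] using (hasSum_segmentIntegral_hankelKernel hρ hτ.le).sub
      (hasSum_integral_stripJump_hankelKernel hρ hτ)
  have hseries : HasSum
      (fun k : ℕ ↦ 2 * π * Complex.I * ((-τ ^ ρ) ^ k / Gamma (ρ * k + 1) : ℝ))
      (2 * π * Complex.I * mittagLeffler ρ (-τ ^ ρ)) :=
    (Complex.hasSum_ofReal.2 (summable_pow_div_Gamma hρ _).hasSum).mul_left _
  refine hcontour.unique (hseries.congr_fun fun k ↦ ?_)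
  rw [hankelIntegral_hankelKernel hτ (by positivity), neg_rpow_pow_div_Gamma ρ hτ.le]
  push_cast
  ring

theorem norm_resolventKernel_le {ρ τ R : ℝ} (hρ : 0 < ρ) (hτ : 0 ≤ τ) (hR : R ≤ -(log 2 / ρ))
    (θ : ℝ) : ‖resolventKernel ρ τ (R + θ * Complex.I)‖ ≤ 2 * exp τ * exp (ρ * R) := by
  set w := Complex.exp (-(ρ * (R + θ * Complex.I))) with hw
  have hnorm : ‖w‖ = exp (-(ρ * R)) := by
    rw [hw, Complex.norm_exp]
    simp
  have htwo : 2 ≤ ‖w‖ := by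
    rw [← neg_div, le_div_iff₀' hρ] at hR
    rw [hnorm, ← exp_log (two_pos (α := ℝ)), exp_le_exp]
    linarith
  have hden : ‖w‖ / 2 ≤ ‖1 + w‖ := by
    have := norm_sub_norm_le w (-1)
    rw [norm_neg, norm_one, sub_neg_eq_add, add_comm w] at this
    linarith
  have hnum : ‖Complex.exp (τ * Complex.exp (R + θ * Complex.I))‖ ≤ exp τ := by
    have hexp : exp R ≤ 1 := exp_le_one_iff.2 (hR.trans (neg_nonpos.2 (by positivity)))
    calc ‖Complex.exp (τ * Complex.exp (R + θ * Complex.I))‖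
        ≤ exp ‖(τ * Complex.exp (R + θ * Complex.I) : ℂ)‖ := Complex.norm_exp_le_exp_norm _
      _ = exp (τ * exp R) := by simp [Complex.norm_exp, abs_of_nonneg hτ]
      _ ≤ exp τ := exp_le_exp.2 (mul_le_of_le_one_right hτ hexp)
  rw [resolventKernel, norm_div, div_le_iff₀ (by linarith)]
  calc _ ≤ exp τ := hnum
    _ = 2 * exp τ * exp (ρ * R) * (‖w‖ / 2) := by
      rw [hnorm, exp_neg]
      field_simp
    _ ≤ 2 * exp τ * exp (ρ * R) * ‖1 + w‖ := by gcongr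

theorem mittagLeffler_neg_rpow {ρ τ : ℝ} (hρ : ρ ∈ Ioo (0 : ℝ) 1) (hτ : 0 < τ) :
    mittagLeffler ρ (-τ ^ ρ) = spectralMoment ρ 0 τ := by
  have hdensity := integrable_spectralMoment hρ hτ 0
  simp only [pow_zero, one_mul] at hdensity
  have hjump : stripJump (resolventKernel ρ τ) = fun s ↦
      -(2 * π * Complex.I) * (exp (-(τ * exp s)) * spectralDensity ρ s : ℝ) :=
    funext fun s ↦ stripJump_resolventKernel hρ τ s
  have hInt : Integrable (stripJump (resolventKernel ρ τ)) := by
    rw [hjump]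
    exact hdensity.ofReal.const_mul _
  have hsegment : Tendsto (segmentIntegral (resolventKernel ρ τ)) atBot (𝓝 0) := by
    simpa using tendsto_segmentIntegral_atBot (differentiableOn_resolventKernel hρ τ) (c := 0)
      hρ.1 fun R hR θ ↦ by simpa using norm_resolventKernel_le hρ.1 hτ.le hR θ
  have hshift := hankelIntegral_eq_sub_integral_stripJump (differentiableOn_resolventKernel hρ τ)
    hInt hsegment (log 2 / ρ)
  rw [hankelIntegral_resolventKernel hρ.1 hτ, hjump, integral_const_mul, integral_complex_ofReal,
    zero_sub, neg_mul, neg_neg] at hshift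
  have hvalue := mul_left_cancel₀ (by simp [pi_ne_zero]) hshift
  simpa [spectralMoment] using Complex.ofReal_injective hvalue

/-! ### Moments of the spectral density -/

theorem spectralMoment_nonneg {ρ : ℝ} (hρ : ρ ∈ Ioo (0 : ℝ) 1) (n : ℕ) (τ : ℝ) :
    0 ≤ spectralMoment ρ n τ :=
  integral_nonneg fun s ↦ mul_nonneg (by positivity) (spectralDensity_nonneg hρ s)

theorem antitoneOn_spectralMoment {ρ : ℝ} (hρ : ρ ∈ Ioo (0 : ℝ) 1) (n : ℕ) :
    AntitoneOn (spectralMoment ρ n) (Ioi 0) := fun τ hτ t ht hτt ↦ by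
  refine integral_mono (integrable_spectralMoment hρ ht n) (integrable_spectralMoment hρ hτ n)
    fun s ↦ mul_le_mul_of_nonneg_right ?_ (spectralDensity_nonneg hρ s)
  gcongr

theorem hasDerivAt_spectralMoment {ρ τ : ℝ} (hρ : ρ ∈ Ioo (0 : ℝ) 1) (hτ : 0 < τ) (n : ℕ) :
    HasDerivAt (spectralMoment ρ n) (-spectralMoment ρ (n + 1) τ) τ := by
  have hcont := continuous_spectralDensity hρ
  have hderiv (s t : ℝ) :
      HasDerivAt (fun t ↦ exp s ^ n * exp (-(t * exp s)) * spectralDensity ρ s)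
        (-(exp s ^ (n + 1) * exp (-(t * exp s)) * spectralDensity ρ s)) t := by
    refine (((((hasDerivAt_id' t).mul_const (exp s)).fun_neg.exp).const_mul
      (exp s ^ n)).mul_const _).congr_deriv ?_
    ring
  have hbound (s : ℝ) {t : ℝ} (ht : τ / 2 < t) :
      ‖-(exp s ^ (n + 1) * exp (-(t * exp s)) * spectralDensity ρ s)‖ ≤
        exp s ^ (n + 1) * exp (-(τ / 2 * exp s)) * spectralDensity ρ s := by
    have hnonneg := spectralDensity_nonneg hρ s
    rw [norm_neg, norm_of_nonneg (by positivity)]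
    gcongr
  refine (hasDerivAt_integral_of_dominated_loc_of_deriv_le (Ioi_mem_nhds (half_lt_self hτ))
    (.of_forall fun t ↦ (by fun_prop : Continuous _).aestronglyMeasurable)
    (integrable_spectralMoment hρ hτ n) (by fun_prop : Continuous _).aestronglyMeasurable
    (.of_forall fun s t ht ↦ hbound s ht) (integrable_spectralMoment hρ (half_pos hτ) (n + 1))
    (.of_forall fun s t _ ↦ hderiv s t)).2.congr_deriv ?_
  rw [integral_neg, spectralMoment]

theorem mittagLefflerEuler_neg_rpow {ρ τ : ℝ} (hρ : ρ ∈ Ioo (0 : ℝ) 1) (hτ : 0 < τ) :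
    mittagLefflerEuler ρ (-τ ^ ρ) = -(τ / ρ * spectralMoment ρ 1 τ) := by
  have hpath : HasDerivAt (fun s ↦ τ * exp (s / ρ)) (τ / ρ) 0 := by
    simpa [div_eq_mul_inv] using (((hasDerivAt_id' (0 : ℝ)).div_const ρ).exp).const_mul τ
  have hmoment : HasDerivAt (fun s ↦ spectralMoment ρ 0 (τ * exp (s / ρ)))
      (-spectralMoment ρ 1 τ * (τ / ρ)) 0 :=
    HasDerivAt.comp (h₂ := spectralMoment ρ 0) 0
      (by simpa using hasDerivAt_spectralMoment hρ hτ 0) hpath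
  have hseries : (fun s ↦ mittagLeffler ρ (-τ ^ ρ * exp s)) =
      fun s ↦ spectralMoment ρ 0 (τ * exp (s / ρ)) := by
    funext s
    rw [← mittagLeffler_neg_rpow hρ (by positivity), mul_rpow hτ.le (exp_pos _).le, ← exp_mul,
      div_mul_cancel₀ _ hρ.1.ne', neg_mul]
  have h := (hseries ▸ hasDerivAt_mittagLeffler_mul_exp hρ.1 (-τ ^ ρ)).unique hmoment
  rw [h]
  ring

/-! ### Integrating over dilations -/

theorem integrableOn_and_hasSum_setIntegral_mul_tsum_rpow {ρ : ℝ} (hρ : 0 ≤ ρ) {f : ℝ → ℝ}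
    (hf : IntegrableOn f (Ioo 0 1)) {w : ℕ → ℝ} (hw : Summable fun k ↦ |w k|) :
    IntegrableOn (fun b ↦ f b * ∑' k : ℕ, w k * b ^ (ρ * k)) (Ioo 0 1) ∧
      HasSum (fun k : ℕ ↦ w k * ∫ b in Ioo 0 1, f b * b ^ (ρ * k))
        (∫ b in Ioo 0 1, f b * ∑' k : ℕ, w k * b ^ (ρ * k)) := by
  simp_rw [← tsum_mul_left, ← integral_const_mul]
  refine (integrable_tsum_and_hasSum_integral (fun k ↦ ?_) hw hf.norm ?_).imp_right
    fun h ↦ h.congr_fun fun k ↦ integral_congr_ae (.of_forall fun b ↦ mul_left_comm _ _ _)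
  · exact hf.aestronglyMeasurable.mul (by fun_prop : Measurable _).aestronglyMeasurable
  · filter_upwards [self_mem_ae_restrict measurableSet_Ioo] with b hb k
    rw [norm_mul, norm_mul, mul_comm, mul_right_comm, ← norm_eq_abs]
    refine mul_le_of_le_one_right (by positivity) ?_
    rw [norm_of_nonneg (rpow_nonneg hb.1.le _)]
    exact rpow_le_one hb.1.le hb.2.le (by positivity)

theorem spectralMoment_zero_mul {ρ τ b : ℝ} (hρ : ρ ∈ Ioo (0 : ℝ) 1) (hτ : 0 < τ) (hb : 0 < b) :
    spectralMoment ρ 0 (τ * b) =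
      ∑' k : ℕ, (-τ ^ ρ) ^ k / Gamma (ρ * k + 1) * b ^ (ρ * k) := by
  rw [← mittagLeffler_neg_rpow hρ (mul_pos hτ hb), mul_rpow hτ.le hb.le, ← neg_mul]
  exact tsum_congr fun k ↦ mul_rpow_pow_div_Gamma _ hb.le k

theorem mul_spectralMoment_one_mul {ρ τ b : ℝ} (hρ : ρ ∈ Ioo (0 : ℝ) 1) (hτ : 0 < τ)
    (hb : 0 < b) :
    τ * b * spectralMoment ρ 1 (τ * b) =
      ∑' k : ℕ, -(ρ * (k * ((-τ ^ ρ) ^ k / Gamma (ρ * k + 1)))) * b ^ (ρ * k) := by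
  have h := mittagLefflerEuler_neg_rpow hρ (mul_pos hτ hb)
  have hρ0 := hρ.1.ne'
  calc τ * b * spectralMoment ρ 1 (τ * b)
      = -ρ * mittagLefflerEuler ρ (-τ ^ ρ * b ^ ρ) := by
        rw [neg_mul (τ ^ ρ), ← mul_rpow hτ.le hb.le, h]
        field_simp
    _ = _ := by
        rw [mittagLefflerEuler, ← tsum_mul_left]
        refine tsum_congr fun k ↦ ?_
        rw [mul_rpow_pow_div_Gamma _ hb.le]
        ring

theorem integrableOn_and_hasSum_setIntegral_mul_spectralMoment_zero {ρ τ : ℝ}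
    (hρ : ρ ∈ Ioo (0 : ℝ) 1) (hτ : 0 < τ) {f : ℝ → ℝ} (hf : IntegrableOn f (Ioo 0 1)) :
    IntegrableOn (fun b ↦ f b * spectralMoment ρ 0 (τ * b)) (Ioo 0 1) ∧
      HasSum (fun k : ℕ ↦ (-τ ^ ρ) ^ k / Gamma (ρ * k + 1) * ∫ b in Ioo 0 1, f b * b ^ (ρ * k))
        (∫ b in Ioo 0 1, f b * spectralMoment ρ 0 (τ * b)) := by
  obtain ⟨hInt, hsum⟩ := integrableOn_and_hasSum_setIntegral_mul_tsum_rpow hρ.1.le hf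
    (summable_pow_div_Gamma hρ.1 (-τ ^ ρ)).abs
  have heq : EqOn (fun b ↦ f b * ∑' k : ℕ, (-τ ^ ρ) ^ k / Gamma (ρ * k + 1) * b ^ (ρ * k))
      (fun b ↦ f b * spectralMoment ρ 0 (τ * b)) (Ioo 0 1) := fun b hb ↦ by
    simp only [spectralMoment_zero_mul hρ hτ hb.1]
  exact ⟨hInt.congr_fun heq measurableSet_Ioo, setIntegral_congr_fun measurableSet_Ioo heq ▸ hsum⟩

theorem integrableOn_and_hasSum_setIntegral_mul_spectralMoment_one {ρ τ : ℝ}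
    (hρ : ρ ∈ Ioo (0 : ℝ) 1) (hτ : 0 < τ) {f : ℝ → ℝ} (hf : IntegrableOn f (Ioo 0 1)) :
    IntegrableOn (fun b ↦ f b * (τ * b * spectralMoment ρ 1 (τ * b))) (Ioo 0 1) ∧
      HasSum (fun k : ℕ ↦ -(ρ * (k * ((-τ ^ ρ) ^ k / Gamma (ρ * k + 1)))) *
          ∫ b in Ioo 0 1, f b * b ^ (ρ * k))
        (∫ b in Ioo 0 1, f b * (τ * b * spectralMoment ρ 1 (τ * b))) := by
  obtain ⟨hInt, hsum⟩ := integrableOn_and_hasSum_setIntegral_mul_tsum_rpow hρ.1.le hf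
    ((summable_mul_pow_div_Gamma hρ.1 (-τ ^ ρ)).mul_left ρ).neg.abs
  have heq : EqOn
      (fun b ↦ f b * ∑' k : ℕ, -(ρ * (k * ((-τ ^ ρ) ^ k / Gamma (ρ * k + 1)))) * b ^ (ρ * k))
      (fun b ↦ f b * (τ * b * spectralMoment ρ 1 (τ * b))) (Ioo 0 1) := fun b hb ↦ by
    simp only [mul_spectralMoment_one_mul hρ hτ hb.1]
  exact ⟨hInt.congr_fun heq measurableSet_Ioo, setIntegral_congr_fun measurableSet_Ioo heq ▸ hsum⟩

theorem setIntegral_mul_spectralMoment_one {ρ τ : ℝ} (hρ : ρ ∈ Ioo (0 : ℝ) 1) (hτ : 0 < τ) :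
    ∫ b in Ioo 0 1, τ * b * spectralMoment ρ 1 (τ * b) =
      (∫ b in Ioo 0 1, spectralMoment ρ 0 (τ * b)) - spectralMoment ρ 0 τ := by
  have hone : IntegrableOn (fun _ : ℝ ↦ (1 : ℝ)) (Ioo 0 1) := by simp
  have hzero := (integrableOn_and_hasSum_setIntegral_mul_spectralMoment_zero hρ hτ hone).2
  have hfirst := (integrableOn_and_hasSum_setIntegral_mul_spectralMoment_one hρ hτ hone).2
  have hvalue : HasSum (fun k : ℕ ↦ (-τ ^ ρ) ^ k / Gamma (ρ * k + 1)) (spectralMoment ρ 0 τ) :=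
    mittagLeffler_neg_rpow hρ hτ ▸ (summable_pow_div_Gamma hρ.1 _).hasSum
  simp only [one_mul] at hzero hfirst
  refine hfirst.unique ((hzero.sub hvalue).congr_fun fun k ↦ ?_)
  have hρk : 0 ≤ ρ * k := mul_nonneg hρ.1.le k.cast_nonneg
  rw [setIntegral_rpow_Ioo_zero_one (by linarith)]
  field_simp
  ring

/-! ### Convolution with a power -/

theorem setIntegral_one_sub_rpow_mul_rpow {α β : ℝ} (hα : 0 < α) (hβ : 0 < β) :
    ∫ b in Ioo (0 : ℝ) 1, (1 - b) ^ (β - 1) * b ^ (α - 1) =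
      Gamma α * Gamma β / Gamma (α + β) := by
  rw [← ProbabilityTheory.beta, ProbabilityTheory.beta_eq_betaIntegralReal α β hα hβ]
  rw [Complex.betaIntegral, intervalIntegral.integral_of_le zero_le_one,
    integral_Ioc_eq_integral_Ioo, ← RCLike.re_to_complex, ← integral_re]
  · refine setIntegral_congr_fun measurableSet_Ioo fun x hx ↦ ?_
    norm_cast
    rw [← Complex.ofReal_cpow hx.1.le, ← Complex.ofReal_cpow (sub_nonneg.2 hx.2.le),
      RCLike.re_to_complex, Complex.re_mul_ofReal, Complex.ofReal_re, mul_comm]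
  · have h := Complex.betaIntegral_convergent (u := α) (v := β) (by simpa) (by simpa)
    rwa [intervalIntegrable_iff_integrableOn_Ioo_of_le zero_le_one] at h

theorem integrableOn_one_sub_rpow_mul_rpow {α β : ℝ} (hα : 0 < α) (hβ : 0 < β) :
    IntegrableOn (fun b : ℝ ↦ (1 - b) ^ (β - 1) * b ^ (α - 1)) (Ioo 0 1) := by
  refine Integrable.of_integral_ne_zero ?_
  rw [setIntegral_one_sub_rpow_mul_rpow hα hβ]
  exact (div_pos (mul_pos (Gamma_pos_of_pos hα) (Gamma_pos_of_pos hβ))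
    (Gamma_pos_of_pos (add_pos hα hβ))).ne'

theorem integrableOn_one_sub_rpow_neg {ρ : ℝ} (hρ : ρ < 1) :
    IntegrableOn (fun b : ℝ ↦ (1 - b) ^ (-ρ)) (Ioo 0 1) := by
  simpa using integrableOn_one_sub_rpow_mul_rpow one_pos (sub_pos.2 hρ)

-- The two integrals have the same series up to a shift of the index by one.
theorem rpow_mul_setIntegral_spectralMoment_zero_add {ρ τ : ℝ} (hρ : ρ ∈ Ioo (0 : ℝ) 1)
    (hτ : 0 < τ) :
    τ ^ ρ * (∫ b in Ioo 0 1, spectralMoment ρ 0 (τ * b)) +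
      (Gamma (1 - ρ))⁻¹ * (∫ b in Ioo 0 1, (1 - b) ^ (-ρ) * spectralMoment ρ 0 (τ * b)) =
        (Gamma (2 - ρ))⁻¹ := by
  have hone : IntegrableOn (fun _ : ℝ ↦ (1 : ℝ)) (Ioo 0 1) := by simp
  have hplain := ((integrableOn_and_hasSum_setIntegral_mul_spectralMoment_zero hρ hτ hone).2
    ).mul_left (-τ ^ ρ)
  have hpower := ((integrableOn_and_hasSum_setIntegral_mul_spectralMoment_zero hρ hτ
    (integrableOn_one_sub_rpow_neg hρ.2)).2).mul_left (Gamma (1 - ρ))⁻¹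
  have hbeta (k : ℕ) : (Gamma (1 - ρ))⁻¹ * ((-τ ^ ρ) ^ k / Gamma (ρ * k + 1) *
      ∫ b in Ioo (0 : ℝ) 1, (1 - b) ^ (-ρ) * b ^ (ρ * k)) =
        (-τ ^ ρ) ^ k / Gamma (ρ * k + 2 - ρ) := by
    have hρk : 0 ≤ ρ * k := mul_nonneg hρ.1.le k.cast_nonneg
    have h := setIntegral_one_sub_rpow_mul_rpow (α := ρ * k + 1) (by linarith) (sub_pos.2 hρ.2)
    rw [show 1 - ρ - 1 = -ρ by ring, add_sub_cancel_right,
      show ρ * k + 1 + (1 - ρ) = ρ * k + 2 - ρ by ring] at h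
    have hΓ := (Gamma_pos_of_pos (sub_pos.2 hρ.2)).ne'
    have hΓk := (Gamma_pos_of_pos (show 0 < ρ * k + 1 by linarith)).ne'
    rw [h]
    field_simp
  have hshift (k : ℕ) : (-τ ^ ρ) ^ (k + 1) / Gamma (ρ * (k + 1 : ℕ) + 2 - ρ) =
      -τ ^ ρ * ((-τ ^ ρ) ^ k / Gamma (ρ * k + 1) * ∫ b in Ioo (0 : ℝ) 1, 1 * b ^ (ρ * k)) := by
    have hρk : 0 ≤ ρ * k := mul_nonneg hρ.1.le k.cast_nonneg
    simp only [one_mul]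
    rw [setIntegral_rpow_Ioo_zero_one (by linarith), pow_succ,
      show ρ * (k + 1 : ℕ) + 2 - ρ = ρ * k + 1 + 1 by push_cast; ring,
      Gamma_add_one (by linarith)]
    field_simp
  simp_rw [hbeta] at hpower
  have h := ((hasSum_nat_add_iff' 1).2 hpower).unique (hplain.congr_fun hshift)
  simp only [one_mul, Finset.sum_range_one, pow_zero, Nat.cast_zero, mul_zero, zero_add,
    one_div] at h
  linarith

/-! ### Values of the Gamma function on either side of the reflection formula -/

theorem one_le_inv_Gamma_two_sub {ρ : ℝ} (hρ : ρ ∈ Ioo (0 : ℝ) 1) : 1 ≤ (Gamma (2 - ρ))⁻¹ := by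
  have h := Gamma_one_add_le_one (sub_nonneg.2 hρ.2.le) (sub_le_self 1 hρ.1.le)
  rw [show 1 + (1 - ρ) = 2 - ρ by ring] at h
  exact (one_le_inv₀ (Gamma_pos_of_pos (by linarith [hρ.2]))).2 h

theorem inv_Gamma_two_sub_le {ρ : ℝ} (hρ : ρ < 1) : (Gamma (2 - ρ))⁻¹ ≤ 2 - ρ := by
  have h := one_div_one_add_le_Gamma_one_add (sub_nonneg.2 hρ.le)
  rw [show 1 + (1 - ρ) = 2 - ρ by ring, one_div] at h
  exact inv_le_of_inv_le₀ (by linarith) h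

theorem inv_le_six_mul_Gamma_two_mul {r : ℝ} (h0 : 0 < r) (h1 : r ≤ 1) :
    r⁻¹ ≤ 6 * Gamma (2 * r) := by
  have h := one_div_one_add_le_Gamma_one_add (show 0 ≤ 2 * r by linarith)
  rw [add_comm, Gamma_add_one (by linarith), div_le_iff₀ (by linarith)] at h
  rw [inv_le_iff_one_le_mul₀ h0]
  nlinarith [mul_pos h0 (Gamma_pos_of_pos (show 0 < 2 * r by linarith))]

theorem sin_div_pi_mul_Gamma {ρ : ℝ} (hρ : ρ ∈ Ioo (0 : ℝ) 1) :
    sin (ρ * π) / π * Gamma ρ = (1 - ρ) * (Gamma (2 - ρ))⁻¹ := by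
  have h1ρ : 0 < 1 - ρ := sub_pos.2 hρ.2
  have hsin := (sin_mul_pi_pos hρ).ne'
  have hΓ := (Gamma_pos_of_pos h1ρ).ne'
  have hreflect := Gamma_mul_Gamma_one_sub ρ
  rw [mul_comm π ρ, eq_div_iff hsin] at hreflect
  rw [show 2 - ρ = 1 - ρ + 1 by ring, Gamma_add_one h1ρ.ne']
  field_simp
  linarith

theorem sin_div_pi_mul_Gamma_add_one {ρ : ℝ} (hρ : ρ ∈ Ioo (0 : ℝ) 1) :
    sin (ρ * π) / π * Gamma (ρ + 1) = ρ * (1 - ρ) * (Gamma (2 - ρ))⁻¹ := by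
  rw [Gamma_add_one hρ.1.ne']
  linear_combination ρ * sin_div_pi_mul_Gamma hρ

theorem sin_div_pi_le {ρ : ℝ} (hρ : ρ ∈ Ioo (0 : ℝ) 1) :
    sin (ρ * π) / π ≤ 9 / 4 * (ρ * (1 - ρ)) := by
  have hσ : 0 < sin (ρ * π) / π := div_pos (sin_mul_pi_pos hρ) pi_pos
  have hρ' : 0 ≤ ρ * (1 - ρ) := mul_nonneg hρ.1.le (sub_nonneg.2 hρ.2.le)
  have hΓ := one_div_one_add_le_Gamma_one_add hρ.1.le
  rw [div_le_iff₀ (by linarith [hρ.1]), add_comm 1 ρ] at hΓ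
  calc sin (ρ * π) / π ≤ sin (ρ * π) / π * (Gamma (ρ + 1) * (ρ + 1)) :=
        le_mul_of_one_le_right hσ.le hΓ
    _ = ρ * (1 - ρ) * ((Gamma (2 - ρ))⁻¹ * (ρ + 1)) := by
        rw [← mul_assoc, sin_div_pi_mul_Gamma_add_one hρ, mul_assoc]
    _ ≤ ρ * (1 - ρ) * ((2 - ρ) * (ρ + 1)) := by
        gcongr
        · linarith [hρ.1]
        · exact inv_Gamma_two_sub_le hρ.2
    _ ≤ ρ * (1 - ρ) * (9 / 4) := by
        gcongr
        nlinarith [sq_nonneg (ρ - 1 / 2)]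
    _ = 9 / 4 * (ρ * (1 - ρ)) := mul_comm _ _

theorem sin_div_pi_mul_Gamma_two_mul_add_one_le {ρ : ℝ} (hρ : ρ ∈ Ioo (0 : ℝ) 1) :
    sin (ρ * π) / π * Gamma (2 * ρ + 1) ≤ 9 / 2 * (ρ * (1 - ρ)) := by
  have hσ : 0 < sin (ρ * π) / π := div_pos (sin_mul_pi_pos hρ) pi_pos
  have hΓ := Gamma_one_add_le_two (r := 2 * ρ) (by linarith [hρ.1]) (by linarith [hρ.2])
  rw [add_comm] at hΓ
  calc sin (ρ * π) / π * Gamma (2 * ρ + 1) ≤ 9 / 4 * (ρ * (1 - ρ)) * 2 :=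
        mul_le_mul (sin_div_pi_le hρ) hΓ (Gamma_pos_of_pos (by linarith [hρ.1])).le
          (hσ.le.trans (sin_div_pi_le hρ))
    _ = 9 / 2 * (ρ * (1 - ρ)) := by ring

theorem sin_div_pi_mul_Gamma_two_mul_le {ρ : ℝ} (hρ : ρ ∈ Ioo (0 : ℝ) 1) :
    sin (ρ * π) / π * Gamma (2 * ρ) ≤ 9 / 4 * (1 - ρ) := by
  have h := sin_div_pi_mul_Gamma_two_mul_add_one_le hρ
  rw [Gamma_add_one (by linarith [hρ.1])] at h
  refine le_of_mul_le_mul_left ?_ hρ.1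
  linarith

/-! ### Bounds for the moments -/

theorem spectralMoment_zero_le {ρ τ : ℝ} (hρ : ρ ∈ Ioo (0 : ℝ) 1) (hτ : 0 < τ) :
    spectralMoment ρ 0 τ ≤ (Gamma (2 - ρ))⁻¹ / τ ^ ρ := by
  have hInt : IntegrableOn (fun b ↦ spectralMoment ρ 0 (τ * b)) (Ioo 0 1) := by
    simpa using (integrableOn_and_hasSum_setIntegral_mul_spectralMoment_zero hρ hτ
      (f := fun _ ↦ 1) (by simp)).1
  have hmono : spectralMoment ρ 0 τ ≤ ∫ b in Ioo 0 1, spectralMoment ρ 0 (τ * b) := by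
    simpa using setIntegral_mono_on (f := fun _ ↦ spectralMoment ρ 0 τ) (by simp) hInt
      measurableSet_Ioo fun b hb ↦ antitoneOn_spectralMoment hρ 0 (mul_pos hτ hb.1) hτ
        (mul_le_of_le_one_right hτ.le hb.2.le)
  have hconv : 0 ≤ ∫ b in Ioo 0 1, (1 - b) ^ (-ρ) * spectralMoment ρ 0 (τ * b) :=
    setIntegral_nonneg measurableSet_Ioo fun b hb ↦
      mul_nonneg (rpow_nonneg (sub_nonneg.2 hb.2.le) _) (spectralMoment_nonneg hρ 0 _)
  have hΓ := Gamma_pos_of_pos (sub_pos.2 hρ.2)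
  rw [le_div_iff₀' (rpow_pos_of_pos hτ ρ), ← rpow_mul_setIntegral_spectralMoment_zero_add hρ hτ]
  exact le_add_of_le_of_nonneg (by gcongr) (by positivity)

theorem setIntegral_one_sub_rpow_mul_spectralMoment_zero_le {ρ τ : ℝ} (hρ : ρ ∈ Ioo (0 : ℝ) 1)
    (hτ : 0 < τ) :
    (Gamma (1 - ρ))⁻¹ * (∫ b in Ioo 0 1, (1 - b) ^ (-ρ) * spectralMoment ρ 0 (τ * b)) ≤
      6 / τ ^ ρ := by
  have h1ρ : 0 < 1 - ρ := sub_pos.2 hρ.2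
  have : 0 < τ ^ ρ := rpow_pos_of_pos hτ ρ
  have := Gamma_pos_of_pos h1ρ
  have hΓ2 := Gamma_pos_of_pos (show 0 < 2 * (1 - ρ) by linarith)
  have hbeta := setIntegral_one_sub_rpow_mul_rpow h1ρ h1ρ
  have hbeta_int := integrableOn_one_sub_rpow_mul_rpow h1ρ h1ρ
  rw [sub_sub_cancel_left] at hbeta hbeta_int
  have hInt := (integrableOn_and_hasSum_setIntegral_mul_spectralMoment_zero hρ hτ
    (integrableOn_one_sub_rpow_neg hρ.2)).1
  have hmono : ∫ b in Ioo 0 1, (1 - b) ^ (-ρ) * spectralMoment ρ 0 (τ * b) ≤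
      (Gamma (2 - ρ))⁻¹ / τ ^ ρ * (Gamma (1 - ρ) * Gamma (1 - ρ) / Gamma (2 * (1 - ρ))) := by
    rw [two_mul, ← hbeta, ← integral_const_mul]
    refine setIntegral_mono_on hInt (hbeta_int.const_mul _) measurableSet_Ioo fun b hb ↦ ?_
    calc (1 - b) ^ (-ρ) * spectralMoment ρ 0 (τ * b)
        ≤ (1 - b) ^ (-ρ) * ((Gamma (2 - ρ))⁻¹ / (τ * b) ^ ρ) :=
          mul_le_mul_of_nonneg_left (spectralMoment_zero_le hρ (mul_pos hτ hb.1))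
            (rpow_nonneg (sub_nonneg.2 hb.2.le) _)
      _ = (Gamma (2 - ρ))⁻¹ / τ ^ ρ * ((1 - b) ^ (-ρ) * b ^ (-ρ)) := by
          rw [mul_rpow hτ.le hb.1.le, rpow_neg hb.1.le]
          field_simp
  calc _ ≤ (Gamma (1 - ρ))⁻¹ * ((Gamma (2 - ρ))⁻¹ / τ ^ ρ *
        (Gamma (1 - ρ) * Gamma (1 - ρ) / Gamma (2 * (1 - ρ)))) := by gcongr
    _ = (1 - ρ)⁻¹ / Gamma (2 * (1 - ρ)) / τ ^ ρ := by
        rw [show 2 - ρ = 1 - ρ + 1 by ring, Gamma_add_one h1ρ.ne']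
        field_simp
    _ ≤ 6 / τ ^ ρ := by
        gcongr
        rw [div_le_iff₀ hΓ2]
        exact inv_le_six_mul_Gamma_two_mul h1ρ (sub_le_self 1 hρ.1.le)

theorem le_setIntegral_spectralMoment_zero {ρ τ : ℝ} (hρ : ρ ∈ Ioo (0 : ℝ) 1) (hτ : 0 < τ) :
    (Gamma (2 - ρ))⁻¹ / τ ^ ρ - 6 / (τ ^ ρ) ^ 2 ≤ ∫ b in Ioo 0 1, spectralMoment ρ 0 (τ * b) := by
  have hx : 0 < τ ^ ρ := rpow_pos_of_pos hτ ρ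
  calc (Gamma (2 - ρ))⁻¹ / τ ^ ρ - 6 / (τ ^ ρ) ^ 2 = ((Gamma (2 - ρ))⁻¹ - 6 / τ ^ ρ) / τ ^ ρ := by
        field_simp
    _ ≤ _ := by
        rw [div_le_iff₀' hx]
        linarith [rpow_mul_setIntegral_spectralMoment_zero_add hρ hτ,
          setIntegral_one_sub_rpow_mul_spectralMoment_zero_le hρ hτ]

theorem integrable_and_integral_pow_mul_exp_neg_mul_exp {τ κ : ℝ} (hτ : 0 < τ) (hκ : 0 < κ)
    (n : ℕ) :
    Integrable (fun s ↦ (τ * exp s) ^ n * exp (-(τ * exp s)) * exp (κ * s)) ∧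
      ∫ s, (τ * exp s) ^ n * exp (-(τ * exp s)) * exp (κ * s) = Gamma (κ + n) / τ ^ κ := by
  obtain ⟨hInt, hval⟩ := integrable_edgeKernel_and_integral hτ
    (show -(κ + n) < 0 by linarith [n.cast_nonneg (α := ℝ)])
  have heq : (fun s ↦ (τ * exp s) ^ n * exp (-(τ * exp s)) * exp (κ * s)) =
      fun s ↦ τ ^ n * edgeKernel τ (-(κ + n)) s := by
    funext s
    rw [edgeKernel, neg_mul, sub_neg_eq_add, add_mul, exp_add, exp_add, mul_pow, ← exp_nat_mul]
    ring
  rw [heq, integral_const_mul, hval, neg_neg, rpow_neg hτ.le, rpow_add hτ, rpow_natCast]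
  exact ⟨hInt.const_mul _, by field_simp⟩

theorem le_spectralDensity {ρ : ℝ} (hρ : ρ ∈ Ioo (0 : ℝ) 1) (s : ℝ) :
    sin (ρ * π) / π * (exp (ρ * s) - 2 * exp (2 * ρ * s)) ≤ spectralDensity ρ s := by
  have hσ : 0 < sin (ρ * π) / π := div_pos (sin_mul_pi_pos hρ) pi_pos
  have hD := spectralDenominator_pos hρ (exp (ρ * s))
  have hy := exp_pos (ρ * s)
  rw [mul_assoc 2 ρ s, two_mul (ρ * s), exp_add, spectralDensity, le_div_iff₀ hD]
  set y := exp (ρ * s)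
  have hDy : spectralDenominator ρ y ≤ (1 + y) ^ 2 := by
    unfold spectralDenominator
    nlinarith [cos_le_one (ρ * π)]
  have hcube : (1 - 2 * y) * spectralDenominator ρ y ≤ 1 := by
    rcases le_total (1 - 2 * y) 0 with h | h
    · exact (mul_nonpos_of_nonpos_of_nonneg h hD.le).trans zero_le_one
    · calc _ ≤ (1 - 2 * y) * (1 + y) ^ 2 := by gcongr
        _ ≤ 1 := by nlinarith [pow_pos hy 3, pow_pos hy 2]
  calc _ = sin (ρ * π) / π * y * ((1 - 2 * y) * spectralDenominator ρ y) := by ring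
    _ ≤ sin (ρ * π) / π * y := mul_le_of_le_one_right (by positivity) hcube

theorem spectralDensity_le {ρ s : ℝ} (hρ : ρ ∈ Ioo (0 : ℝ) 1) (hs : exp (ρ * s) ≤ 1 / 2) :
    spectralDensity ρ s ≤ sin (ρ * π) / π * (exp (ρ * s) + 6 * exp (2 * ρ * s)) := by
  have hσ : 0 < sin (ρ * π) / π := div_pos (sin_mul_pi_pos hρ) pi_pos
  have hy := exp_pos (ρ * s)
  rw [mul_assoc 2 ρ s, two_mul (ρ * s), exp_add, spectralDensity,
    div_le_iff₀ (spectralDenominator_pos hρ _)]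
  set y := exp (ρ * s)
  have hDy : (1 - y) ^ 2 ≤ spectralDenominator ρ y := by
    unfold spectralDenominator
    nlinarith [neg_one_le_cos (ρ * π)]
  have hcube : 1 ≤ (1 + 6 * y) * (1 - y) ^ 2 := by
    have : 0 ≤ y * ((1 - 2 * y) * (4 - 3 * y)) :=
      mul_nonneg hy.le (mul_nonneg (by linarith) (by linarith))
    linarith
  calc sin (ρ * π) / π * y ≤ sin (ρ * π) / π * y * ((1 + 6 * y) * (1 - y) ^ 2) :=
        le_mul_of_one_le_right (by positivity) hcube
    _ ≤ sin (ρ * π) / π * y * ((1 + 6 * y) * spectralDenominator ρ y) := by gcongr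
    _ = _ := by ring

theorem le_pow_mul_spectralMoment {ρ τ : ℝ} (hρ : ρ ∈ Ioo (0 : ℝ) 1) (hτ : 0 < τ) (n : ℕ) :
    sin (ρ * π) / π * Gamma (ρ + n) / τ ^ ρ - 2 * (sin (ρ * π) / π * Gamma (2 * ρ + n)) /
      τ ^ (2 * ρ) ≤ τ ^ n * spectralMoment ρ n τ := by
  obtain ⟨hInt₁, hval₁⟩ := integrable_and_integral_pow_mul_exp_neg_mul_exp hτ hρ.1 n
  obtain ⟨hInt₂, hval₂⟩ := integrable_and_integral_pow_mul_exp_neg_mul_exp hτ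
    (mul_pos two_pos hρ.1) n
  have hmono := integral_mono ((hInt₁.const_mul (sin (ρ * π) / π)).sub
    (hInt₂.const_mul (2 * (sin (ρ * π) / π))))
    ((integrable_spectralMoment hρ hτ n).const_mul (τ ^ n)) fun s ↦ by
      have h := mul_le_mul_of_nonneg_left (le_spectralDensity hρ s)
        (show 0 ≤ (τ * exp s) ^ n * exp (-(τ * exp s)) by positivity)
      refine (le_of_eq ?_).trans (h.trans_eq ?_)
      · rw [Pi.sub_apply]; ring
      · ring
  simp only [Pi.sub_apply] at hmono
  rw [integral_sub (hInt₁.const_mul _) (hInt₂.const_mul _), integral_const_mul,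
    integral_const_mul, integral_const_mul, hval₁, hval₂] at hmono
  rw [spectralMoment]
  refine le_trans (le_of_eq ?_) hmono
  ring

theorem sq_mul_exp_neg_half_le_one {z : ℝ} (hz : 43 / 2 ≤ z) : z ^ 2 * exp (-(z / 2)) ≤ 1 := by
  have hz2 : 400 ≤ z ^ 2 := by nlinarith
  rw [exp_neg, ← div_eq_mul_inv, div_le_one (exp_pos _)]
  calc z ^ 2 ≤ (z / 2) ^ 4 / 24 := by nlinarith [sq_nonneg z]
    _ = (z / 2) ^ 4 / (Nat.factorial 4) := by norm_num [Nat.factorial]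
    _ ≤ exp (z / 2) := pow_div_factorial_le_exp (z / 2) (by linarith) 4

-- Where `exp (ρ * s) > 1 / 2` the variable `z = τ * exp s` is at least `τ ^ ρ / 2`, so half of the
-- exponential pays for the missing factor `1 / τ ^ ρ`.
theorem pow_mul_exp_neg_half_le {ρ τ s : ℝ} (hρ : ρ ∈ Ioo (0 : ℝ) 1) (hτ : 0 < τ)
    (hx : 43 ≤ τ ^ ρ) (hs : 1 / 2 ≤ exp (ρ * s)) {n : ℕ} (hn : n ≤ 1) :
    (τ * exp s) ^ n * exp (-(τ * exp s / 2)) ≤ 2 / τ ^ ρ := by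
  set z := τ * exp s with hz
  have hz0 : 0 < z := by positivity
  have hzρ : τ ^ ρ / 2 ≤ z ^ ρ := by
    rw [hz, mul_rpow hτ.le (exp_pos s).le, ← exp_mul, mul_comm s]
    nlinarith
  have hz1 : 1 ≤ z := by
    by_contra! hlt
    linarith [rpow_le_one hz0.le hlt.le hρ.1.le]
  have hzx : τ ^ ρ / 2 ≤ z := hzρ.trans (by
    simpa using rpow_le_rpow_of_exponent_le hz1 hρ.2.le)
  have hsq := sq_mul_exp_neg_half_le_one (z := z) (by linarith)
  have he := exp_pos (-(z / 2))
  calc z ^ n * exp (-(z / 2)) ≤ z ^ 1 * exp (-(z / 2)) := by gcongr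
    _ ≤ 2 / τ ^ ρ := by
      rw [le_div_iff₀ (by linarith)]
      nlinarith [mul_pos hz0 he]

theorem pow_mul_spectralDensity_le {ρ τ : ℝ} (hρ : ρ ∈ Ioo (0 : ℝ) 1) (hτ : 0 < τ)
    (hx : 43 ≤ τ ^ ρ) {n : ℕ} (hn : n ≤ 1) (s : ℝ) :
    (τ * exp s) ^ n * exp (-(τ * exp s)) * spectralDensity ρ s ≤
      (τ * exp s) ^ n * exp (-(τ * exp s)) *
          (sin (ρ * π) / π * (exp (ρ * s) + 6 * exp (2 * ρ * s))) +
        2 / τ ^ ρ * (exp (-(τ / 2 * exp s)) * spectralDensity ρ s) := by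
  have hK := spectralDensity_nonneg hρ s
  have hσ : 0 < sin (ρ * π) / π := div_pos (sin_mul_pi_pos hρ) pi_pos
  rcases le_total (exp (ρ * s)) (1 / 2) with hs | hs
  · refine le_add_of_le_of_nonneg ?_ (by positivity)
    gcongr
    exact spectralDensity_le hρ hs
  · refine le_add_of_nonneg_of_le (by positivity) ?_
    calc (τ * exp s) ^ n * exp (-(τ * exp s)) * spectralDensity ρ s
        = (τ * exp s) ^ n * exp (-(τ * exp s / 2)) *
          (exp (-(τ / 2 * exp s)) * spectralDensity ρ s) := by
          rw [show -(τ * exp s) = -(τ * exp s / 2) + -(τ / 2 * exp s) by ring, exp_add]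
          ring
      _ ≤ _ := by
          gcongr
          exact pow_mul_exp_neg_half_le hρ hτ hx hs hn

theorem spectralMoment_zero_half_le {ρ τ : ℝ} (hρ : ρ ∈ Ioo (0 : ℝ) 1) (hτ : 0 < τ) :
    spectralMoment ρ 0 (τ / 2) ≤ 4 / τ ^ ρ := by
  refine (spectralMoment_zero_le hρ (half_pos hτ)).trans ?_
  have h2 : (2 : ℝ) ^ ρ ≤ 2 := by
    simpa using rpow_le_rpow_of_exponent_le (one_le_two (α := ℝ)) hρ.2.le
  have hΓ := inv_Gamma_two_sub_le hρ.2
  rw [div_rpow hτ.le zero_le_two, div_div_eq_mul_div]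
  gcongr
  nlinarith [one_le_inv_Gamma_two_sub hρ, hρ.1]

theorem pow_mul_spectralMoment_le {ρ τ : ℝ} (hρ : ρ ∈ Ioo (0 : ℝ) 1) (hτ : 0 < τ)
    (hx : 43 ≤ τ ^ ρ) {n : ℕ} (hn : n ≤ 1) :
    τ ^ n * spectralMoment ρ n τ ≤ sin (ρ * π) / π * Gamma (ρ + n) / τ ^ ρ +
      (6 * (sin (ρ * π) / π * Gamma (2 * ρ + n)) + 8) / (τ ^ ρ) ^ 2 := by
  obtain ⟨hInt₁, hval₁⟩ := integrable_and_integral_pow_mul_exp_neg_mul_exp hτ hρ.1 n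
  obtain ⟨hInt₂, hval₂⟩ := integrable_and_integral_pow_mul_exp_neg_mul_exp hτ
    (mul_pos two_pos hρ.1) n
  have hInt₃ := integrable_spectralMoment hρ (half_pos hτ) 0
  have hmono := integral_mono ((integrable_spectralMoment hρ hτ n).const_mul (τ ^ n))
    (((hInt₁.const_mul (sin (ρ * π) / π)).add (hInt₂.const_mul (6 * (sin (ρ * π) / π)))).add
      (hInt₃.const_mul (2 / τ ^ ρ))) fun s ↦ by
      refine (le_of_eq ?_).trans ((pow_mul_spectralDensity_le hρ hτ hx hn s).trans_eq ?_)
      · ring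
      · simp only [Pi.add_apply]; ring
  rw [integral_add' ((hInt₁.const_mul _).add (hInt₂.const_mul _)) (hInt₃.const_mul _),
    integral_add' (hInt₁.const_mul _) (hInt₂.const_mul _), integral_const_mul, integral_const_mul,
    integral_const_mul, integral_const_mul, hval₁, hval₂] at hmono
  have hhalf : 2 / τ ^ ρ * spectralMoment ρ 0 (τ / 2) ≤ 2 / τ ^ ρ * (4 / τ ^ ρ) := by
    gcongr
    exact spectralMoment_zero_half_le hρ hτ
  rw [mul_comm 2 ρ, rpow_mul hτ.le, rpow_two] at hmono
  calc τ ^ n * spectralMoment ρ n τ ≤ _ := hmono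
    _ ≤ _ := add_le_add_right hhalf _
    _ = _ := by field_simp; ring

/-! ### The derivative in the order -/

theorem spectralMoment_zero_le_of_le {ρ τ : ℝ} (hρ : ρ ∈ Ioo (0 : ℝ) 1) (hτ : 0 < τ)
    (hx : 43 ≤ τ ^ ρ) :
    spectralMoment ρ 0 τ ≤ (1 - ρ) * ((Gamma (2 - ρ))⁻¹ / τ ^ ρ) +
      (27 / 2 * (1 - ρ) + 8) / (τ ^ ρ) ^ 2 := by
  have h := pow_mul_spectralMoment_le hρ hτ hx zero_le_one
  rw [pow_zero, one_mul, Nat.cast_zero, add_zero, add_zero, sin_div_pi_mul_Gamma hρ,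
    mul_div_assoc] at h
  refine h.trans ?_
  gcongr _ + ?_ / _
  linarith [sin_div_pi_mul_Gamma_two_mul_le hρ]

theorem mul_spectralMoment_one_le {ρ τ : ℝ} (hρ : ρ ∈ Ioo (0 : ℝ) 1) (hτ : 0 < τ)
    (hx : 43 ≤ τ ^ ρ) :
    τ * spectralMoment ρ 1 τ ≤ ρ * (1 - ρ) * ((Gamma (2 - ρ))⁻¹ / τ ^ ρ) +
      (27 * (ρ * (1 - ρ)) + 8) / (τ ^ ρ) ^ 2 := by
  have h := pow_mul_spectralMoment_le hρ hτ hx le_rfl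
  rw [pow_one, Nat.cast_one, sin_div_pi_mul_Gamma_add_one hρ, mul_div_assoc] at h
  refine h.trans ?_
  gcongr _ + ?_ / _
  linarith [sin_div_pi_mul_Gamma_two_mul_add_one_le hρ]

theorem le_mul_spectralMoment_one {ρ τ : ℝ} (hρ : ρ ∈ Ioo (0 : ℝ) 1) (hτ : 0 < τ) :
    ρ * (1 - ρ) * ((Gamma (2 - ρ))⁻¹ / τ ^ ρ) - 9 * (ρ * (1 - ρ)) / (τ ^ ρ) ^ 2 ≤
      τ * spectralMoment ρ 1 τ := by
  have h := le_pow_mul_spectralMoment hρ hτ 1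
  rw [pow_one, Nat.cast_one, sin_div_pi_mul_Gamma_add_one hρ, mul_div_assoc, mul_comm 2 ρ,
    rpow_mul hτ.le, rpow_two] at h
  refine le_trans ?_ h
  gcongr _ - ?_ / _
  rw [mul_comm ρ 2]
  linarith [sin_div_pi_mul_Gamma_two_mul_add_one_le hρ]

theorem integrableOn_pow_Ioo_zero_one (m : ℕ) : IntegrableOn (fun b : ℝ ↦ b ^ m) (Ioo 0 1) := by
  simpa using integrableOn_rpow_Ioo_zero_one (m := m) (by linarith [m.cast_nonneg (α := ℝ)])

theorem integrableOn_pow_mul_spectralMoment_one {ρ τ : ℝ} (hρ : ρ ∈ Ioo (0 : ℝ) 1) (hτ : 0 < τ)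
    (m : ℕ) :
    IntegrableOn (fun b ↦ b ^ m * (τ * b * spectralMoment ρ 1 (τ * b))) (Ioo 0 1) :=
  (integrableOn_and_hasSum_setIntegral_mul_spectralMoment_one hρ hτ
    (integrableOn_pow_Ioo_zero_one m)).1

theorem le_setIntegral_pow_mul_spectralMoment_one {ρ τ : ℝ} (hρ : ρ ∈ Ioo (0 : ℝ) 1) (hτ : 0 < τ)
    {m : ℕ} (hm : 1 ≤ m) :
    ρ * (1 - ρ) * ((Gamma (2 - ρ))⁻¹ / τ ^ ρ) * (1 / (m - ρ + 1)) -
        9 * (ρ * (1 - ρ)) / (τ ^ ρ) ^ 2 * (1 / (m - 2 * ρ + 1)) ≤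
      ∫ b in Ioo 0 1, b ^ m * (τ * b * spectralMoment ρ 1 (τ * b)) := by
  have hm' : (1 : ℝ) ≤ m := Nat.one_le_cast.2 hm
  have h₁ : -1 < m - ρ := by linarith [hρ.2]
  have h₂ : -1 < m - 2 * ρ := by linarith [hρ.2]
  have hInt₁ := (integrableOn_rpow_Ioo_zero_one h₁).const_mul
    (ρ * (1 - ρ) * ((Gamma (2 - ρ))⁻¹ / τ ^ ρ))
  have hInt₂ := (integrableOn_rpow_Ioo_zero_one h₂).const_mul (9 * (ρ * (1 - ρ)) / (τ ^ ρ) ^ 2)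
  rw [← setIntegral_rpow_Ioo_zero_one h₁, ← setIntegral_rpow_Ioo_zero_one h₂,
    ← integral_const_mul, ← integral_const_mul, ← integral_sub hInt₁ hInt₂]
  refine setIntegral_mono_on (hInt₁.sub hInt₂) (integrableOn_pow_mul_spectralMoment_one hρ hτ m)
    measurableSet_Ioo fun b hb ↦ ?_
  refine le_trans (le_of_eq ?_) (mul_le_mul_of_nonneg_left
    (le_mul_spectralMoment_one hρ (mul_pos hτ hb.1)) (pow_nonneg hb.1.le m))
  rw [mul_rpow hτ.le hb.1.le, rpow_sub hb.1, rpow_sub hb.1, mul_comm 2 ρ, rpow_mul hb.1.le,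
    rpow_two, rpow_natCast]
  field_simp

theorem mul_inv_Gamma_two_sub_div_nonneg {ρ τ : ℝ} (hρ : ρ ∈ Ioo (0 : ℝ) 1) (hτ : 0 < τ) :
    0 ≤ ρ * (1 - ρ) * ((Gamma (2 - ρ))⁻¹ / τ ^ ρ) :=
  mul_nonneg (mul_nonneg hρ.1.le (sub_nonneg.2 hρ.2.le))
    (div_nonneg (zero_le_one.trans (one_le_inv_Gamma_two_sub hρ)) (rpow_nonneg hτ.le ρ))

theorem le_setIntegral_mul_spectralMoment_one {ρ τ : ℝ} (hρ : ρ ∈ Ioo (0 : ℝ) 1) (hτ : 0 < τ) :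
    ρ * (1 - ρ) * ((Gamma (2 - ρ))⁻¹ / τ ^ ρ) / 2 - 9 / 2 * ρ / (τ ^ ρ) ^ 2 ≤
      ∫ b in Ioo 0 1, b ^ 1 * (τ * b * spectralMoment ρ 1 (τ * b)) := by
  have h := le_setIntegral_pow_mul_spectralMoment_one hρ hτ le_rfl
  have hH := mul_inv_Gamma_two_sub_div_nonneg hρ hτ
  have h1ρ : 0 < 1 - ρ := sub_pos.2 hρ.2
  have hmain : (1 : ℝ) / 2 ≤ 1 / ((1 : ℕ) - ρ + 1) := by
    rw [Nat.cast_one]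
    exact one_div_le_one_div_of_le (by linarith) (by linarith [hρ.1])
  have herror : 9 * (ρ * (1 - ρ)) / (τ ^ ρ) ^ 2 * (1 / ((1 : ℕ) - 2 * ρ + 1)) =
      9 / 2 * ρ / (τ ^ ρ) ^ 2 := by
    rw [Nat.cast_one, show 1 - 2 * ρ + 1 = 2 * (1 - ρ) by ring]
    field_simp
  linarith [mul_le_mul_of_nonneg_left hmain hH]

theorem le_setIntegral_sq_mul_spectralMoment_one {ρ τ : ℝ} (hρ : ρ ∈ Ioo (0 : ℝ) 1) (hτ : 0 < τ) :
    ρ * (1 - ρ) * ((Gamma (2 - ρ))⁻¹ / τ ^ ρ) / 3 - 9 * (ρ * (1 - ρ)) / (τ ^ ρ) ^ 2 ≤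
      ∫ b in Ioo 0 1, b ^ 2 * (τ * b * spectralMoment ρ 1 (τ * b)) := by
  have h := le_setIntegral_pow_mul_spectralMoment_one hρ hτ one_le_two
  have hH := mul_inv_Gamma_two_sub_div_nonneg hρ hτ
  have hq : 0 ≤ 9 * (ρ * (1 - ρ)) / (τ ^ ρ) ^ 2 :=
    div_nonneg (by nlinarith [hρ.1, hρ.2]) (sq_nonneg _)
  have hmain : (1 : ℝ) / 3 ≤ 1 / ((2 : ℕ) - ρ + 1) := by
    rw [Nat.cast_two]
    exact one_div_le_one_div_of_le (by linarith [hρ.2]) (by linarith [hρ.1])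
  have herror : 1 / ((2 : ℕ) - 2 * ρ + 1) ≤ 1 := by
    rw [Nat.cast_two]
    exact div_le_one_of_le₀ (by linarith [hρ.2]) (by linarith [hρ.2])
  linarith [mul_le_mul_of_nonneg_left hmain hH, mul_le_mul_of_nonneg_left herror hq]

theorem mittagLefflerEuler_sub_div_le {ρ τ b : ℝ} (hρ : ρ ∈ Ioo (0 : ℝ) 1) (hτ : 0 < τ)
    (hb : b ∈ Ioo (0 : ℝ) 1) (n : ℕ) :
    (mittagLefflerEuler ρ (-τ ^ ρ * b ^ ρ) - mittagLefflerEuler ρ (-τ ^ ρ)) / (1 - b) ≤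
      ρ⁻¹ * (τ * spectralMoment ρ 1 τ * (∑ k ∈ Finset.range (n + 1), b ^ k) -
        ∑ k ∈ Finset.range n, b ^ k * (τ * b * spectralMoment ρ 1 (τ * b))) := by
  have hτb : 0 < τ * b := mul_pos hτ hb.1
  have hanti : spectralMoment ρ 1 τ ≤ spectralMoment ρ 1 (τ * b) :=
    antitoneOn_spectralMoment hρ 1 hτb hτ (mul_le_of_le_one_right hτ.le hb.2.le)
  have hrest : 0 ≤ ρ⁻¹ * (τ * b ^ (n + 1) *
      (spectralMoment ρ 1 (τ * b) - spectralMoment ρ 1 τ)) :=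
    mul_nonneg (inv_nonneg.2 hρ.1.le)
      (mul_nonneg (mul_pos hτ (pow_pos hb.1 _)).le (sub_nonneg.2 hanti))
  rw [neg_mul, ← mul_rpow hτ.le hb.1.le, mittagLefflerEuler_neg_rpow hρ hτ,
    mittagLefflerEuler_neg_rpow hρ hτb, div_le_iff₀ (sub_pos.2 hb.2), ← Finset.sum_mul]
  linear_combination hrest -
    ρ⁻¹ * τ * spectralMoment ρ 1 τ * geom_sum_mul_neg b (n + 1) +
    ρ⁻¹ * τ * b * spectralMoment ρ 1 (τ * b) * geom_sum_mul_neg b n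

theorem setIntegral_geom_sum_Ioo_zero_one (n : ℕ) :
    ∫ b in Ioo (0 : ℝ) 1, ∑ k ∈ Finset.range n, b ^ k = harmonic n := by
  rw [integral_finsetSum _ fun k _ ↦ integrableOn_pow_Ioo_zero_one k, harmonic, Rat.cast_sum]
  refine Finset.sum_congr rfl fun k _ ↦ ?_
  have h := setIntegral_rpow_Ioo_zero_one (m := k) (by linarith [k.cast_nonneg (α := ℝ)])
  simp only [rpow_natCast] at h
  rw [h]
  push_cast
  exact one_div _

theorem setIntegral_mittagLefflerEuler_sub_div_le {ρ τ : ℝ} (hρ : ρ ∈ Ioo (0 : ℝ) 1)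
    (hτ : 0 < τ) (n : ℕ) :
    ∫ b in Ioo 0 1,
        (mittagLefflerEuler ρ (-τ ^ ρ * b ^ ρ) - mittagLefflerEuler ρ (-τ ^ ρ)) / (1 - b) ≤
      ρ⁻¹ * (τ * spectralMoment ρ 1 τ * harmonic (n + 1) - ∑ k ∈ Finset.range n,
        ∫ b in Ioo 0 1, b ^ k * (τ * b * spectralMoment ρ 1 (τ * b))) := by
  have hInt₁ := (integrable_finsetSum (Finset.range (n + 1)) fun k _ ↦
    integrableOn_pow_Ioo_zero_one k).const_mul (τ * spectralMoment ρ 1 τ)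
  have hInt₂ := integrable_finsetSum (Finset.range n) fun k _ ↦
    integrableOn_pow_mul_spectralMoment_one hρ hτ k
  rw [← setIntegral_geom_sum_Ioo_zero_one, ← integral_const_mul,
    ← integral_finsetSum _ fun k _ ↦ integrableOn_pow_mul_spectralMoment_one hρ hτ k,
    ← integral_sub hInt₁ hInt₂, ← integral_const_mul]
  exact setIntegral_mono_on (integrableOn_and_hasSum_mittagLefflerEuler_sub_div hρ.1 _).1
    ((hInt₁.sub hInt₂).const_mul _) measurableSet_Ioo fun b hb ↦
      mittagLefflerEuler_sub_div_le hρ hτ hb n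

theorem le_sum_setIntegral_pow_mul_spectralMoment_one {ρ τ : ℝ} (hρ : ρ ∈ Ioo (0 : ℝ) 1)
    (hτ : 0 < τ) (hx : 43 ≤ τ ^ ρ) :
    5 / 6 * (τ * spectralMoment ρ 1 τ) + ρ * ((Gamma (2 - ρ))⁻¹ / τ ^ ρ) - 43 / (τ ^ ρ) ^ 2 ≤
      ∑ k ∈ Finset.range 3,
        ∫ b in Ioo 0 1, b ^ k * (τ * b * spectralMoment ρ 1 (τ * b)) := by
  have hM₀ := le_setIntegral_spectralMoment_zero hρ hτ
  have hM₁ := le_setIntegral_mul_spectralMoment_one hρ hτ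
  have hM₂ := le_setIntegral_sq_mul_spectralMoment_one hρ hτ
  have hU := spectralMoment_zero_le_of_le hρ hτ hx
  have hV := mul_spectralMoment_one_le hρ hτ hx
  have hcoeff : 63 / 2 * (ρ * (1 - ρ)) + 62 / 3 + 27 / 2 * (1 - ρ) + 9 / 2 * ρ ≤ 43 := by
    linarith [sq_nonneg (ρ - 1 / 2), hρ.1]
  have hq : 0 ≤ 1 / (τ ^ ρ) ^ 2 := by positivity
  simp only [Finset.sum_range_succ, Finset.sum_range_zero, pow_zero, one_mul, zero_add]
  rw [setIntegral_mul_spectralMoment_one hρ hτ]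
  linear_combination hM₀ + hM₁ + hM₂ + hU + 5 / 6 * hV + mul_le_mul_of_nonneg_right hcoeff hq

theorem mittagLefflerEuler_add_setIntegral_le {ρ τ : ℝ} (hρ : ρ ∈ Ioo (0 : ℝ) 1) (hτ : 0 < τ)
    (c : ℝ) (n : ℕ) :
    c * mittagLefflerEuler ρ (-τ ^ ρ) +
        ∫ b in Ioo 0 1,
          (mittagLefflerEuler ρ (-τ ^ ρ * b ^ ρ) - mittagLefflerEuler ρ (-τ ^ ρ)) / (1 - b) ≤
      ρ⁻¹ * ((harmonic (n + 1) - c) * (τ * spectralMoment ρ 1 τ) - ∑ k ∈ Finset.range n,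
        ∫ b in Ioo 0 1, b ^ k * (τ * b * spectralMoment ρ 1 (τ * b))) := by
  linear_combination setIntegral_mittagLefflerEuler_sub_div_le hρ hτ n +
    c * mittagLefflerEuler_neg_rpow hρ hτ

-- For large `τ ^ ρ` the harmonic number is `harmonic 4 = 25 / 12`: then `25 / 12 - 5 / 4 = 5 / 6`,
-- which the leading coefficients `1 / 2` and `1 / 3` of the last two moment integrals cancel.
theorem mittagLefflerEuler_add_setIntegral_le_neg_inv {ρ τ c : ℝ} (hρ : ρ ∈ Ioo (0 : ℝ) 1)
    (hτ : 0 < τ) (hc : 5 / 4 ≤ c) :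
    c * mittagLefflerEuler ρ (-τ ^ ρ) +
        ∫ b in Ioo 0 1,
          (mittagLefflerEuler ρ (-τ ^ ρ * b ^ ρ) - mittagLefflerEuler ρ (-τ ^ ρ)) / (1 - b) ≤
      -1 / τ ^ ρ + 43 / ρ / (τ ^ ρ) ^ 2 := by
  have : 0 < τ ^ ρ := rpow_pos_of_pos hτ ρ
  have hρinv : 0 < ρ⁻¹ := inv_pos.2 hρ.1
  have hV : 0 ≤ τ * spectralMoment ρ 1 τ := mul_nonneg hτ.le (spectralMoment_nonneg hρ 1 τ)
  have hD := mittagLefflerEuler_add_setIntegral_le hρ hτ c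
  rcases le_total (τ ^ ρ) (43 / ρ) with hsmall | hlarge
  · calc _ ≤ ρ⁻¹ * ((1 - c) * (τ * spectralMoment ρ 1 τ)) := by simpa [harmonic] using hD 0
      _ ≤ 0 := mul_nonpos_of_nonneg_of_nonpos hρinv.le
        (mul_nonpos_of_nonpos_of_nonneg (by linarith) hV)
      _ ≤ (43 / ρ - τ ^ ρ) / (τ ^ ρ) ^ 2 := div_nonneg (sub_nonneg.2 hsmall) (sq_nonneg _)
      _ = _ := by field_simp; ring
  · have hx43 : 43 ≤ τ ^ ρ := (le_div_self (by norm_num) hρ.1 hρ.2.le).trans hlarge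
    have hharmonic : (harmonic 4 : ℝ) = 25 / 12 := by
      norm_num [harmonic, Finset.sum_range_succ]
    calc _ ≤ ρ⁻¹ * ((harmonic 4 - c) * (τ * spectralMoment ρ 1 τ) - ∑ k ∈ Finset.range 3,
            ∫ b in Ioo 0 1, b ^ k * (τ * b * spectralMoment ρ 1 (τ * b))) := hD 3
      _ ≤ ρ⁻¹ * (43 / (τ ^ ρ) ^ 2 - ρ * ((Gamma (2 - ρ))⁻¹ / τ ^ ρ)) := by
        refine mul_le_mul_of_nonneg_left ?_ hρinv.le
        rw [hharmonic]
        linarith [le_sum_setIntegral_pow_mul_spectralMoment_one hρ hτ hx43,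
          mul_le_mul_of_nonneg_right hc hV]
      _ = 43 / ρ / (τ ^ ρ) ^ 2 - (Gamma (2 - ρ))⁻¹ / τ ^ ρ := by
        have := hρ.1.ne'
        field_simp
      _ ≤ 43 / ρ / (τ ^ ρ) ^ 2 - 1 / τ ^ ρ := by
        gcongr
        exact one_le_inv_Gamma_two_sub hρ
      _ = _ := by ring

theorem stmt7_general {ρ lam t₀ : ℝ} (hρ : ρ ∈ Ioo (0 : ℝ) 1) (hlam : 0 < lam) (ht₀ : 2 ≤ t₀) :
    DifferentiableAt ℝ (fun ρ ↦ mittagLeffler ρ (-(lam * t₀ ^ ρ))) ρ ∧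
      deriv (fun ρ ↦ mittagLeffler ρ (-(lam * t₀ ^ ρ))) ρ ≤
        -1 / (lam * t₀ ^ ρ) + 43 / ρ / (lam * t₀ ^ ρ) ^ 2 := by
  have ht : 0 < t₀ := two_pos.trans_le ht₀
  have hderiv := hasDerivAt_mittagLeffler_mul_rpow hρ.1 ht (-lam)
  have hscale : (lam ^ (1 / ρ) * t₀) ^ ρ = lam * t₀ ^ ρ := by
    rw [mul_rpow (rpow_nonneg hlam.le _) ht.le, ← rpow_mul hlam.le, one_div_mul_cancel hρ.1.ne',
      rpow_one]
  have hc : 5 / 4 ≤ log t₀ + eulerMascheroniConstant := by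
    linarith [five_fourths_le_eulerMascheroniConstant_add_log_two, log_le_log two_pos ht₀]
  have hbound := mittagLefflerEuler_add_setIntegral_le_neg_inv hρ
    (mul_pos (rpow_pos_of_pos hlam (1 / ρ)) ht) hc
  simp only [neg_mul] at hderiv
  simp only [hscale, neg_mul] at hbound
  exact ⟨hderiv.differentiableAt, hderiv.deriv.trans_le hbound⟩

/-- With `B₁ = 43`, `B₂ = 4.6`: for `0 < ρ₀ < 1`, `λ > 0`, `t₀ ≥ 2` and every
`ρ ∈ [ρ₀, 1)`, the function `ρ ↦ E_ρ(−λ t₀^ρ)` is differentiable at `ρ` with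
`d/dρ E_ρ(−λ t₀^ρ) < −1/(λ t₀^ρ) + (B₁/ρ + B₂ ln t₀)/(λ t₀^ρ)²`. -/
theorem stmt7 (ρ₀ lam t₀ : ℝ) (hρ₀ : 0 < ρ₀) (hρ₀' : ρ₀ < 1) (hlam : 0 < lam)
    (ht₀ : 2 ≤ t₀) :
    ∀ ρ ∈ Set.Ico ρ₀ 1,
      DifferentiableAt ℝ (fun ρ : ℝ => mittagLeffler ρ (-(lam * t₀ ^ ρ))) ρ ∧
      deriv (fun ρ : ℝ => mittagLeffler ρ (-(lam * t₀ ^ ρ))) ρ <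
        -1 / (lam * t₀ ^ ρ) + (43 / ρ + 4.6 * Real.log t₀) / (lam * t₀ ^ ρ) ^ 2 := by
  intro ρ hρ
  have hlog : 0 < log t₀ := log_pos (one_lt_two.trans_le ht₀)
  have : 0 < lam * t₀ ^ ρ := mul_pos hlam (rpow_pos_of_pos (two_pos.trans_le ht₀) ρ)
  refine (stmt7_general ⟨hρ₀.trans_le hρ.1, hρ.2⟩ hlam ht₀).imp_right fun h ↦ h.trans_lt ?_
  gcongr
  linarith
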